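/- arXiv:2009.11682 — 5 statements merged into one kernel-verified Lean document; each statement's English description precedes it below -/
import Mathlib

section
/- Let n ≥ 1, let m₁,…,m_n be positive integers with N = Σ_{i=1}^n m_i, and let r, s, q ∈ ℂ satisfy r + 4s + 2q(m_i − 1) ≠ 0 for every i, q(r + 8s + 2(N−2)q) ≠ 0, and h = r + 4s + 2q(N−1) ≠ 0. Let 𝒜̃ be the configuration in ℂ^n consisting of the covectors f^i with multiplicity r·m_i (1 ≤ i ≤ n), 2f^i with multiplicity s·m_i + (1/2)q·m_i(m_i − 1) (1 ≤ i ≤ n), and f^i ± f^j with multiplicity q·m_i m_j (1 ≤ i < j ≤ n), where f^1,…,f^n is the standard dual basis of (ℂ^n)*. Let λ ∈ ℂ satisfy λ² = 2h³ / ( q(r + 8s + 2(N−2)q) ). Then (𝒜̃, c, λ) satisfies the trigonometric WDVV equations; in particular the quadratic part equals Σ_{α∈𝒜̃} c_α α(ξ)² = h Σ_{i=1}^n m_i ξ_i². -/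
open scoped Classical
open Finset

noncomputable section

/-- Evaluation of a covector `α` on a vector `x` in `ℂ^N`. -/
def ev {N : ℕ} (α x : Fin N → ℂ) : ℂ := ∑ i, α i * x i

/-- The bilinear form `G_𝒜` associated to a configuration. -/
def Gform {N : ℕ} (A : Finset (Fin N → ℂ)) (c : (Fin N → ℂ) → ℂ)
    (u v : Fin N → ℂ) : ℂ :=
  ∑ α ∈ A, c α * ev α u * ev α v

/-- `(α ∧ β)(a, b) = α(a)β(b) - α(b)β(a)`. -/
def wedge {N : ℕ} (α β a b : Fin N → ℂ) : ℂ :=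
  ev α a * ev β b - ev α b * ev β a

/-- Non-degeneracy of `G_𝒜`. -/
def Nondeg {N : ℕ} (A : Finset (Fin N → ℂ)) (c : (Fin N → ℂ) → ℂ) : Prop :=
  ∀ u : Fin N → ℂ, (∀ v : Fin N → ℂ, Gform A c u v = 0) → u = 0

/-- `dual` assigns to each covector `γ ∈ 𝒜` its `G_𝒜`-dual vector `γ^∨`. -/
def IsDual {N : ℕ} (A : Finset (Fin N → ℂ)) (c : (Fin N → ℂ) → ℂ)
    (dual : (Fin N → ℂ) → Fin N → ℂ) : Prop :=
  ∀ γ ∈ A, ∀ v : Fin N → ℂ, Gform A c (dual γ) v = ev γ v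

/-- `γ` is proportional to `α`. -/
def Collin {N : ℕ} (α γ : Fin N → ℂ) : Prop := ∃ t : ℂ, γ = t • α

/-- `γ₁ ∼ γ₂` iff `γ₁ + γ₂` or `γ₁ - γ₂` is an integer multiple of `α`. -/
def SeriesRel {N : ℕ} (α γ₁ γ₂ : Fin N → ℂ) : Prop :=
  ∃ m : ℤ, γ₁ + γ₂ = (m : ℂ) • α ∨ γ₁ - γ₂ = (m : ℂ) • α

/-- `Γ` is an (maximal) `α`-series of the configuration `A`. -/
def IsSeries {N : ℕ} (A : Finset (Fin N → ℂ)) (α : Fin N → ℂ)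
    (Γ : Finset (Fin N → ℂ)) : Prop :=
  Γ.Nonempty ∧ (∀ γ ∈ Γ, γ ∈ A ∧ ¬ Collin α γ) ∧
    (∀ γ₁ ∈ Γ, ∀ γ₂ ∈ Γ, SeriesRel α γ₁ γ₂) ∧
    (∀ β ∈ A, ¬ Collin α β → (∃ γ ∈ Γ, SeriesRel α β γ) → β ∈ Γ)

/-- The trigonometric ∨-conditions. -/
def IsTrigVSystem {N : ℕ} (A : Finset (Fin N → ℂ)) (c : (Fin N → ℂ) → ℂ)
    (dual : (Fin N → ℂ) → Fin N → ℂ) : Prop :=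
  ∀ α ∈ A, ∀ Γ : Finset (Fin N → ℂ), IsSeries A α Γ →
    ∀ a b : Fin N → ℂ, ∑ β ∈ Γ, c β * ev α (dual β) * wedge α β a b = 0

/-- The form `G^{(1)}_𝒜` evaluated at `(u, v)`. -/
def G1form {N : ℕ} (A : Finset (Fin N → ℂ)) (c : (Fin N → ℂ) → ℂ)
    (u v : Fin N → ℂ) : ℂ :=
  ∑ α ∈ A, ∑ β ∈ A, c α * c β * wedge α β u v ^ 2

/-- The form `G^{(2)}_𝒜` evaluated at `(u, v)`. -/
def G2form {N : ℕ} (A : Finset (Fin N → ℂ)) (c : (Fin N → ℂ) → ℂ)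
    (dual : (Fin N → ℂ) → Fin N → ℂ) (u v : Fin N → ℂ) : ℂ :=
  ∑ α ∈ A, ∑ β ∈ A,
    c α * c β * Gform A c (dual α) (dual β) * wedge α β u v ^ 2

/-- Complex cotangent. -/
def ccot (z : ℂ) : ℂ := Complex.cos z / Complex.sin z

/-- The matrix `F_i(x)` of third derivatives of the prepotential, `1 ≤ i ≤ N`. -/
def Fmat {N : ℕ} (A : Finset (Fin N → ℂ)) (c : (Fin N → ℂ) → ℂ) (lam : ℂ)
    (i : Fin N) (x : Fin N → ℂ) : Matrix (Fin N ⊕ Unit) (Fin N ⊕ Unit) ℂ :=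
  Matrix.of fun p q =>
    match p, q with
    | Sum.inl p, Sum.inl q => lam * ∑ α ∈ A, c α * α i * α p * α q * ccot (ev α x)
    | Sum.inl p, Sum.inr _ => 2 * ∑ α ∈ A, c α * α i * α p
    | Sum.inr _, Sum.inl q => 2 * ∑ α ∈ A, c α * α i * α q
    | Sum.inr _, Sum.inr _ => 0

/-- The constant matrix `F_{N+1}`. -/
def Flast {N : ℕ} (A : Finset (Fin N → ℂ)) (c : (Fin N → ℂ) → ℂ) :
    Matrix (Fin N ⊕ Unit) (Fin N ⊕ Unit) ℂ :=
  Matrix.of fun p q =>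
    match p, q with
    | Sum.inl p, Sum.inl q => 2 * ∑ α ∈ A, c α * α p * α q
    | Sum.inr _, Sum.inr _ => 2
    | _, _ => 0

/-- `(𝒜, c, λ)` satisfies the trigonometric WDVV equations. -/
def SatisfiesWDVV {N : ℕ} (A : Finset (Fin N → ℂ)) (c : (Fin N → ℂ) → ℂ)
    (lam : ℂ) : Prop :=
  IsUnit (Flast A c) ∧
    ∀ x : Fin N → ℂ, (∀ α ∈ A, Complex.sin (ev α x) ≠ 0) →
      ∀ i j : Fin N,
        Fmat A c lam i x * (Flast A c)⁻¹ * Fmat A c lam j x =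
          Fmat A c lam j x * (Flast A c)⁻¹ * Fmat A c lam i x

/-- The covectors of `𝒜` lie in a lattice of full rank `N` in `(ℂ^N)^*`. -/
def InLattice {N : ℕ} (A : Finset (Fin N → ℂ)) : Prop :=
  ∃ L : Fin N → Fin N → ℂ, LinearIndependent ℂ L ∧
    ∀ α ∈ A, ∃ m : Fin N → ℤ, α = ∑ i, (m i : ℂ) • L i

/-- No two covectors of `𝒜` are negatively proportional. -/
def PositiveSystem {N : ℕ} (A : Finset (Fin N → ℂ)) : Prop :=
  ∀ α ∈ A, ∀ t : ℝ, t < 0 → (t : ℂ) • α ∉ A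

/-- The standard covector `e^i` of `(ℂ^N)^*`. -/
def esgl (N : ℕ) (i : Fin N) : Fin N → ℂ := Pi.single i 1

/-- The set of covectors of the configuration `BC_N⁺`:
`e^i`, `2e^i` (`1 ≤ i ≤ N`) and `e^i ± e^j` (`1 ≤ i < j ≤ N`). -/
def BCfin (N : ℕ) : Finset (Fin N → ℂ) :=
  (Finset.univ.image (fun i : Fin N => esgl N i)) ∪
  (Finset.univ.image (fun i : Fin N => (2 : ℂ) • esgl N i)) ∪
  ((Finset.univ.filter (fun p : Fin N × Fin N => p.1 < p.2)).image
    (fun p => esgl N p.1 + esgl N p.2)) ∪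
  ((Finset.univ.filter (fun p : Fin N × Fin N => p.1 < p.2)).image
    (fun p => esgl N p.1 - esgl N p.2))

-- helpers start

lemma BC_pair_sum {n : ℕ} (g : Fin n → Fin n → ℂ) (hs : ∀ a b, g a b = g b a)
    (hz : ∀ a, g a a = 0) :
    2 * ∑ p ∈ Finset.univ.filter (fun p : Fin n × Fin n => p.1 < p.2), g p.1 p.2 =
      ∑ a, ∑ b, g a b := by
  have h1 : ∑ p ∈ Finset.univ.filter (fun p : Fin n × Fin n => p.1 < p.2), g p.1 p.2
      = ∑ a, ∑ b, if a < b then g a b else 0 := by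
    rw [Finset.sum_filter, Fintype.sum_prod_type]
  have h2 : ∑ a, ∑ b, (if a < b then g a b else 0)
      = ∑ a, ∑ b, if b < a then g a b else 0 := by
    rw [Finset.sum_comm]
    refine Finset.sum_congr rfl fun a _ => Finset.sum_congr rfl fun b _ => ?_
    rw [hs]
  rw [two_mul]
  nth_rewrite 2 [h1]
  rw [h2, h1, ← Finset.sum_add_distrib]
  refine Finset.sum_congr rfl fun a _ => ?_
  rw [← Finset.sum_add_distrib]
  refine Finset.sum_congr rfl fun b _ => ?_
  rcases lt_trichotomy a b with h | h | h
  · simp [h, h.not_gt]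
  · simp [h, hz]
  · simp [h, h.not_gt]

lemma BC_esgl_apply {n : ℕ} (i k : Fin n) : esgl n i k = if k = i then 1 else 0 := by
  simp [esgl, Pi.single_apply]

lemma BC_sum_split {n : ℕ} (f : (Fin n → ℂ) → ℂ) :
    ∑ α ∈ BCfin n, f α = ∑ i, f (esgl n i) + ∑ i, f ((2 : ℂ) • esgl n i)
      + ∑ p ∈ Finset.univ.filter (fun p : Fin n × Fin n => p.1 < p.2), f (esgl n p.1 + esgl n p.2)
      + ∑ p ∈ Finset.univ.filter (fun p : Fin n × Fin n => p.1 < p.2),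
          f (esgl n p.1 - esgl n p.2) := by
  have key : ∀ (s t : Fin n → ℂ), s = t → ∀ k, s k = t k := fun s t h k => by rw [h]
  unfold BCfin
  rw [Finset.sum_union, Finset.sum_union, Finset.sum_union, Finset.sum_image, Finset.sum_image,
    Finset.sum_image, Finset.sum_image]
  · rintro ⟨a, b⟩ hab ⟨c, d⟩ hcd h
    simp only [Finset.coe_filter, Finset.mem_univ, true_and, Set.mem_ofPred_eq] at hab hcd
    have h1 := key _ _ h a
    have h2 := key _ _ h b
    simp only [Pi.sub_apply, BC_esgl_apply, if_neg hab.ne, if_neg hab.ne'] at h1 h2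
    have : a = c := by
      by_contra hne
      by_cases h3 : a = d <;> simp [hne, h3, hcd.ne, hcd.ne'] at h1
      all_goals norm_num [eq_comm] at h1
    have : b = d := by
      by_contra hne
      by_cases h3 : b = c <;> simp [hne, h3, hcd.ne, hcd.ne'] at h2
      all_goals norm_num at h2
    simp [*]
  · rintro ⟨a, b⟩ hab ⟨c, d⟩ hcd h
    simp only [Finset.coe_filter, Finset.mem_univ, true_and, Set.mem_ofPred_eq] at hab hcd
    have h1 := key _ _ h a
    have h2 := key _ _ h b
    simp only [Pi.add_apply, BC_esgl_apply, if_neg hab.ne, if_neg hab.ne'] at h1 h2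
    have h3 : a = c ∨ a = d := by
      by_contra hne
      push Not at hne
      simp [hne] at h1
    have h4 : b = c ∨ b = d := by
      by_contra hne
      push Not at hne
      simp [hne] at h2
    simp only [Prod.mk.injEq]
    omega
  · intro a _ b _ h
    have h1 := key _ _ h a
    by_contra hne
    simp [BC_esgl_apply, hne] at h1
  · intro a _ b _ h
    have h1 := key _ _ h a
    by_contra hne
    simp [BC_esgl_apply, hne] at h1
  · rw [Finset.disjoint_left]
    intro v hv hw
    simp only [Finset.mem_image, Finset.mem_univ, true_and] at hv hw
    obtain ⟨a, rfl⟩ := hv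
    obtain ⟨b, hb⟩ := hw
    have h1 := key _ _ hb b
    by_cases hne : b = a <;> simp [BC_esgl_apply, hne] at h1
  · rw [Finset.disjoint_left]
    intro v hv hw
    simp only [Finset.mem_image, Finset.mem_union, Finset.mem_filter,
      Finset.mem_univ, true_and] at hv hw
    obtain ⟨⟨b, c⟩, hbc, hb⟩ := hw
    simp only at hbc hb
    rcases hv with ⟨a, rfl⟩ | ⟨a, rfl⟩
    all_goals
      have h1 := key _ _ hb b
      have h2 := key _ _ hb c
      simp only [Pi.add_apply, Pi.smul_apply, BC_esgl_apply, if_neg hbc.ne,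
        if_neg hbc.ne'] at h1 h2
      by_cases h3 : b = a <;> by_cases h4 : c = a <;> simp [h3, h4] at h1 h2
      all_goals (subst h3; subst h4; exact absurd hbc (lt_irrefl _))
  · rw [Finset.disjoint_left]
    intro v hv hw
    simp only [Finset.mem_image, Finset.mem_union, Finset.mem_filter,
      Finset.mem_univ, true_and] at hv hw
    obtain ⟨⟨b, c⟩, hbc, hb⟩ := hw
    simp only at hbc hb
    have h2 := key _ _ hb c
    simp only [Pi.sub_apply, BC_esgl_apply, if_neg hbc.ne,
        if_neg hbc.ne'] at h2
    rcases hv with (⟨a, rfl⟩ | ⟨a, rfl⟩) | ⟨⟨a, d⟩, had, rfl⟩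
    · by_cases h3 : c = a <;> simp [BC_esgl_apply, h3] at h2
      norm_num [eq_comm] at h2
    · by_cases h3 : c = a <;> simp [BC_esgl_apply, h3] at h2
      norm_num at h2
    · simp only at had
      by_cases h3 : c = a <;> by_cases h4 : c = d <;> simp [BC_esgl_apply, h3, h4] at h2 <;>
        norm_num at h2
      all_goals (split_ifs at h2 <;> norm_num at h2)

lemma BC_ite_plus (v : ℂ) (P1 P2 Q1 Q2 R1 R2 : Prop) [Decidable P1] [Decidable P2]
    [Decidable Q1] [Decidable Q2] [Decidable R1] [Decidable R2] (σ : ℂ) :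
    v * (((if P1 then 1 else 0) + σ * (if P2 then 1 else 0)) *
      ((if Q1 then 1 else 0) + σ * (if Q2 then 1 else 0)) *
      ((if R1 then 1 else 0) + σ * (if R2 then 1 else 0))) =
      (if P1 then (if Q1 then (if R1 then v else 0) else 0) else 0)
      + σ * (if P1 then (if Q1 then (if R2 then v else 0) else 0) else 0)
      + σ * (if P1 then (if Q2 then (if R1 then v else 0) else 0) else 0)
      + σ ^ 2 * (if P1 then (if Q2 then (if R2 then v else 0) else 0) else 0)
      + σ * (if P2 then (if Q1 then (if R1 then v else 0) else 0) else 0)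
      + σ ^ 2 * (if P2 then (if Q1 then (if R2 then v else 0) else 0) else 0)
      + σ ^ 2 * (if P2 then (if Q2 then (if R1 then v else 0) else 0) else 0)
      + σ ^ 3 * (if P2 then (if Q2 then (if R2 then v else 0) else 0) else 0) := by
  have h : ∀ (P Q R : Prop) [Decidable P] [Decidable Q] [Decidable R],
      (if P then (if Q then (if R then v else 0) else 0) else 0) =
      v * (if P then 1 else 0) * (if Q then 1 else 0) * (if R then 1 else 0) := by
    intro P Q R _ _ _
    by_cases P <;> by_cases Q <;> by_cases R <;> simp [*]
  simp only [h]
  ring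

lemma BC_delta_plus {n : ℕ} (V : Fin n → Fin n → ℂ) (hs : ∀ a b, V a b = V b a)
    (hz : ∀ a, V a a = 0) (i p k : Fin n) :
    ∑ a, ∑ b, V a b * ((esgl n a + esgl n b) i * (esgl n a + esgl n b) p
        * (esgl n a + esgl n b) k) =
      2 * ((if i = p ∧ p = k then ∑ b, V i b else 0) + (if i = p then V i k else 0)
        + (if i = k then V i p else 0) + (if p = k then V p i else 0)) := by
  have e : ∀ a b, V a b * ((esgl n a + esgl n b) i * (esgl n a + esgl n b) p
        * (esgl n a + esgl n b) k) =
      (if i = a then (if p = a then (if k = a then V a b else 0) else 0) else 0)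
      + (if i = a then (if p = a then (if k = b then V a b else 0) else 0) else 0)
      + (if i = a then (if p = b then (if k = a then V a b else 0) else 0) else 0)
      + (if i = a then (if p = b then (if k = b then V a b else 0) else 0) else 0)
      + (if i = b then (if p = a then (if k = a then V a b else 0) else 0) else 0)
      + (if i = b then (if p = a then (if k = b then V a b else 0) else 0) else 0)
      + (if i = b then (if p = b then (if k = a then V a b else 0) else 0) else 0)
      + (if i = b then (if p = b then (if k = b then V a b else 0) else 0) else 0) := by
    intro a b
    have := BC_ite_plus (V a b) (i = a) (i = b) (p = a) (p = b) (k = a) (k = b) 1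
    simp only [Pi.add_apply, BC_esgl_apply]
    simp only [one_mul, one_pow] at this
    exact this
  simp only [e, Finset.sum_add_distrib]
  simp only [Finset.sum_ite_eq, Finset.sum_ite_irrel, Finset.sum_const_zero, Finset.mem_univ,
    if_true]
  have e2 : ∑ x, V x i = ∑ x, V i x := Finset.sum_congr rfl fun b _ => hs _ _
  by_cases h1 : i = p
  · subst h1
    by_cases h2 : i = k
    · subst h2
      simp [hz, e2]; ring
    · simp [h2, Ne.symm h2, hz, hs k i]; ring
  · by_cases h2 : i = k
    · subst h2
      simp [h1, Ne.symm h1, hz, hs p i]; ring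
    · by_cases h3 : p = k
      · subst h3
        simp [h1, Ne.symm h1, hz, hs p i]; ring
      · simp [h1, h2, h3, Ne.symm h1, Ne.symm h2, Ne.symm h3]

lemma BC_delta_minus {n : ℕ} (V : Fin n → Fin n → ℂ) (hs : ∀ a b, V a b = - V b a)
    (hz : ∀ a, V a a = 0) (i p k : Fin n) :
    ∑ a, ∑ b, V a b * ((esgl n a - esgl n b) i * (esgl n a - esgl n b) p
        * (esgl n a - esgl n b) k) =
      2 * ((if i = p ∧ p = k then ∑ b, V i b else 0) - (if i = p then V i k else 0)
        - (if i = k then V i p else 0) - (if p = k then V p i else 0)) := by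
  have e : ∀ a b, V a b * ((esgl n a - esgl n b) i * (esgl n a - esgl n b) p
        * (esgl n a - esgl n b) k) =
      (if i = a then (if p = a then (if k = a then V a b else 0) else 0) else 0)
      - (if i = a then (if p = a then (if k = b then V a b else 0) else 0) else 0)
      - (if i = a then (if p = b then (if k = a then V a b else 0) else 0) else 0)
      + (if i = a then (if p = b then (if k = b then V a b else 0) else 0) else 0)
      - (if i = b then (if p = a then (if k = a then V a b else 0) else 0) else 0)
      + (if i = b then (if p = a then (if k = b then V a b else 0) else 0) else 0)
      + (if i = b then (if p = b then (if k = a then V a b else 0) else 0) else 0)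
      - (if i = b then (if p = b then (if k = b then V a b else 0) else 0) else 0) := by
    intro a b
    have := BC_ite_plus (V a b) (i = a) (i = b) (p = a) (p = b) (k = a) (k = b) (-1)
    simp only [Pi.sub_apply, BC_esgl_apply]
    rw [show ((-1 : ℂ)) ^ 2 = 1 by norm_num, show ((-1 : ℂ)) ^ 3 = -1 by norm_num] at this
    simp only [one_mul, neg_one_mul, ← sub_eq_add_neg] at this
    exact this
  simp only [e, Finset.sum_add_distrib, Finset.sum_sub_distrib]
  simp only [Finset.sum_ite_eq, Finset.sum_ite_irrel, Finset.sum_const_zero, Finset.mem_univ,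
    if_true]
  have e2 : ∑ x, V x i = - ∑ x, V i x := by
    rw [← Finset.sum_neg_distrib]
    exact Finset.sum_congr rfl fun b _ => hs _ _
  by_cases h1 : i = p
  · subst h1
    by_cases h2 : i = k
    · subst h2
      simp [hz, e2]; ring
    · simp [h2, Ne.symm h2, hz, hs k i]; ring
  · by_cases h2 : i = k
    · subst h2
      simp [h1, Ne.symm h1, hz, hs p i]; ring
    · by_cases h3 : p = k
      · subst h3
        simp [h1, Ne.symm h1, hz, hs p i]; ring
      · simp [h1, h2, h3, Ne.symm h1, Ne.symm h2, Ne.symm h3]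

def BCU {n : ℕ} (x : Fin n → ℂ) (i j : Fin n) : ℂ :=
  2 * Complex.sin (2 * x j) / (Complex.cos (2 * x i) - Complex.cos (2 * x j))

lemma BCU_self {n : ℕ} (x : Fin n → ℂ) (i : Fin n) : BCU x i i = 0 := by simp [BCU]

lemma BC_sinsin (a b : ℂ) : Complex.cos (2 * a) - Complex.cos (2 * b) =
    - 2 * (Complex.sin (a + b) * Complex.sin (a - b)) := by
  rw [Complex.cos_two_mul, Complex.cos_two_mul, Complex.sin_add, Complex.sin_sub]
  linear_combination (2 * Complex.cos b ^ 2) * Complex.sin_sq_add_cos_sq a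
    - (2 * Complex.cos a ^ 2) * Complex.sin_sq_add_cos_sq b

lemma BCU_eq {n : ℕ} (x : Fin n → ℂ) (i j : Fin n) (h1 : Complex.sin (x i + x j) ≠ 0)
    (h2 : Complex.sin (x i - x j) ≠ 0) :
    BCU x i j = ccot (x i + x j) - ccot (x i - x j) := by
  have e : Complex.sin (2 * x j) = Complex.sin ((x i + x j) - (x i - x j)) := by
    congr 1; ring
  rw [BCU, BC_sinsin, ccot, ccot, e, Complex.sin_sub (x i + x j)]
  field_simp
  ring

lemma ccot_neg (z : ℂ) : ccot (-z) = - ccot z := by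
  simp [ccot, neg_div, div_neg]

lemma BCU_eq' {n : ℕ} (x : Fin n → ℂ) (i j : Fin n) (h1 : Complex.sin (x i + x j) ≠ 0)
    (h2 : Complex.sin (x i - x j) ≠ 0) :
    BCU x j i = ccot (x i + x j) + ccot (x i - x j) := by
  rw [BCU_eq x j i (by rwa [add_comm]) (by rw [← neg_sub, Complex.sin_neg]; exact neg_ne_zero.2 h2),
    ← neg_sub (x i) (x j), ccot_neg, add_comm (x j)]
  ring

lemma ev_esgl {n : ℕ} (i : Fin n) (x : Fin n → ℂ) : ev (esgl n i) x = x i := by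
  simp [ev, BC_esgl_apply]

lemma ev_two {n : ℕ} (i : Fin n) (x : Fin n → ℂ) : ev ((2:ℂ) • esgl n i) x = 2 * x i := by
  simp [ev, BC_esgl_apply]

lemma ev_add' {n : ℕ} (i j : Fin n) (x : Fin n → ℂ) :
    ev (esgl n i + esgl n j) x = x i + x j := by
  simp [ev, BC_esgl_apply, add_mul, Finset.sum_add_distrib]

lemma ev_sub' {n : ℕ} (i j : Fin n) (x : Fin n → ℂ) :
    ev (esgl n i - esgl n j) x = x i - x j := by
  simp [ev, BC_esgl_apply, sub_mul, Finset.sum_sub_distrib]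

lemma BC_regular {n : ℕ} (x : Fin n → ℂ) (hx : ∀ α ∈ BCfin n, Complex.sin (ev α x) ≠ 0) :
    (∀ i, Complex.sin (x i) ≠ 0) ∧ (∀ i, Complex.sin (2 * x i) ≠ 0) ∧
    (∀ i j, i ≠ j → Complex.sin (x i + x j) ≠ 0 ∧ Complex.sin (x i - x j) ≠ 0) := by
  have H : ∀ i j, i < j → Complex.sin (x i + x j) ≠ 0 ∧ Complex.sin (x i - x j) ≠ 0 := by
    intro i j hij
    constructor
    · have := hx (esgl n i + esgl n j) (by
        simp only [BCfin, Finset.mem_union, Finset.mem_image, Finset.mem_filter]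
        exact Or.inl (Or.inr ⟨(i, j), by simpa using hij, rfl⟩))
      rwa [ev_add'] at this
    · have := hx (esgl n i - esgl n j) (by
        simp only [BCfin, Finset.mem_union, Finset.mem_image, Finset.mem_filter]
        exact Or.inr ⟨(i, j), by simpa using hij, rfl⟩)
      rwa [ev_sub'] at this
  refine ⟨fun i => ?_, fun i => ?_, fun i j hij => ?_⟩
  · have := hx (esgl n i) (by simp [BCfin])
    rwa [ev_esgl] at this
  · have := hx ((2:ℂ) • esgl n i) (by
      simp only [BCfin, Finset.mem_union, Finset.mem_image, Finset.mem_filter]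
      exact Or.inl (Or.inl (Or.inr ⟨i, by simp, rfl⟩)))
    rwa [ev_two] at this
  · rcases lt_or_gt_of_ne hij with h | h
    · exact H i j h
    · obtain ⟨h1, h2⟩ := H j i h
      refine ⟨by rwa [add_comm], ?_⟩
      rw [← neg_sub, Complex.sin_neg]
      exact neg_ne_zero.2 h2

/-- diagonal coefficient -/
def BCa {n : ℕ} (m : Fin n → ℕ) (r s q : ℂ) (x : Fin n → ℂ) (i : Fin n) : ℂ :=
  r * ccot (x i) + (8 * s + 4 * q * ((m i : ℂ) - 1)) * ccot (2 * x i)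
    + q * ∑ b, (m b : ℂ) * BCU x b i

/-- the tensor of third derivatives -/
def BCT {n : ℕ} (m : Fin n → ℕ) (r s q : ℂ) (x : Fin n → ℂ) (i p k : Fin n) : ℂ :=
  (if i = p ∧ p = k then m i * BCa m r s q x i else 0)
    + (if i = p then q * m i * m k * BCU x i k else 0)
    + (if i = k then q * m i * m p * BCU x i p else 0)
    + (if p = k then q * m p * m i * BCU x p i else 0)

lemma BC_tensor {n : ℕ} (m : Fin n → ℕ) (r s q : ℂ) (c : (Fin n → ℂ) → ℂ)
    (hc1 : ∀ i : Fin n, c (esgl n i) = r * (m i : ℂ))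
    (hc2 : ∀ i : Fin n, c ((2 : ℂ) • esgl n i) =
      s * (m i : ℂ) + q * (m i : ℂ) * ((m i : ℂ) - 1) / 2)
    (hc3 : ∀ i j : Fin n, i < j →
      c (esgl n i + esgl n j) = q * (m i : ℂ) * (m j : ℂ) ∧
      c (esgl n i - esgl n j) = q * (m i : ℂ) * (m j : ℂ)) (x : Fin n → ℂ)
    (hx : ∀ α ∈ BCfin n, Complex.sin (ev α x) ≠ 0) (i p k : Fin n) :
    ∑ α ∈ BCfin n, c α * α i * α p * α k * ccot (ev α x) = BCT m r s q x i p k := by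
  obtain ⟨_, _, hx3⟩ := BC_regular x hx
  rw [BC_sum_split]
  set V : Fin n → Fin n → ℂ := fun a b =>
    if a = b then 0 else q * m a * m b * ccot (x a + x b) with hV
  set W : Fin n → Fin n → ℂ := fun a b =>
    if a = b then 0 else q * m a * m b * ccot (x a - x b) with hW
  have hVs : ∀ a b, V a b = V b a := by
    intro a b
    by_cases h : a = b
    · simp [h]
    · simp only [hV, if_neg h, if_neg (Ne.symm h), add_comm (x b)]; ring
  have hWs : ∀ a b, W a b = - W b a := by
    intro a b
    by_cases h : a = b
    · simp [hW, h]
    · simp only [hW, if_neg h, if_neg (Ne.symm h), ← neg_sub (x b), ccot_neg]; ring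
  have hVz : ∀ a, V a a = 0 := by simp [hV]
  have hWz : ∀ a, W a a = 0 := by simp [hW]
  have s3 : ∑ p_1 ∈ Finset.univ.filter (fun p : Fin n × Fin n => p.1 < p.2),
      c (esgl n p_1.1 + esgl n p_1.2) * (esgl n p_1.1 + esgl n p_1.2) i *
        (esgl n p_1.1 + esgl n p_1.2) p * (esgl n p_1.1 + esgl n p_1.2) k *
        ccot (ev (esgl n p_1.1 + esgl n p_1.2) x) =
      (if i = p ∧ p = k then ∑ b, V i b else 0) + (if i = p then V i k else 0)
        + (if i = k then V i p else 0) + (if p = k then V p i else 0) := by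
    have h := BC_delta_plus V hVs hVz i p k
    rw [← BC_pair_sum (fun a b => V a b * ((esgl n a + esgl n b) i * (esgl n a + esgl n b) p
        * (esgl n a + esgl n b) k)) (by intro a b; simp only [hVs a b, add_comm (esgl n b)])
        (by intro a; simp [hVz])] at h
    rw [← mul_left_cancel₀ two_ne_zero h]
    refine Finset.sum_congr rfl fun y hy => ?_
    have hy' := (Finset.mem_filter.1 hy).2
    rw [(hc3 _ _ hy').1, ev_add']
    simp only [hV, if_neg hy'.ne]
    ring
  have s4 : ∑ p_1 ∈ Finset.univ.filter (fun p : Fin n × Fin n => p.1 < p.2),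
      c (esgl n p_1.1 - esgl n p_1.2) * (esgl n p_1.1 - esgl n p_1.2) i *
        (esgl n p_1.1 - esgl n p_1.2) p * (esgl n p_1.1 - esgl n p_1.2) k *
        ccot (ev (esgl n p_1.1 - esgl n p_1.2) x) =
      (if i = p ∧ p = k then ∑ b, W i b else 0) - (if i = p then W i k else 0)
        - (if i = k then W i p else 0) - (if p = k then W p i else 0) := by
    have h := BC_delta_minus W hWs hWz i p k
    rw [← BC_pair_sum (fun a b => W a b * ((esgl n a - esgl n b) i * (esgl n a - esgl n b) p
        * (esgl n a - esgl n b) k))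
        (by intro a b; simp only [hWs a b, Pi.sub_apply]; ring)
        (by intro a; simp [hWz])] at h
    rw [← mul_left_cancel₀ two_ne_zero h]
    refine Finset.sum_congr rfl fun y hy => ?_
    have hy' := (Finset.mem_filter.1 hy).2
    rw [(hc3 _ _ hy').2, ev_sub']
    simp only [hW, if_neg hy'.ne]
    ring
  rw [s3, s4]
  have hU : ∀ a b, V a b - W a b = q * m a * m b * BCU x a b := by
    intro a b
    by_cases h : a = b
    · subst h; simp [hV, hW, BCU_self]
    · rw [BCU_eq x a b (hx3 a b h).1 (hx3 a b h).2]
      simp only [hV, hW, if_neg h]; ring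
  have hU' : ∀ a b, V a b + W a b = q * m a * m b * BCU x b a := by
    intro a b
    by_cases h : a = b
    · subst h; simp [hV, hW, BCU_self]
    · rw [BCU_eq' x a b (hx3 a b h).1 (hx3 a b h).2]
      simp only [hV, hW, if_neg h]; ring
  have s1 : ∑ a, c (esgl n a) * esgl n a i * esgl n a p * esgl n a k * ccot (ev (esgl n a) x)
      = if i = p ∧ p = k then m i * (r * ccot (x i)) else 0 := by
    rw [Finset.sum_eq_single i]
    · rw [hc1, ev_esgl]
      simp only [BC_esgl_apply]
      by_cases h1 : i = p
      · subst h1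
        by_cases h2 : i = k
        · subst h2; simp; ring
        · simp [h2, Ne.symm h2]
      · simp [h1, Ne.symm h1]
    · intro b _ hb
      simp [BC_esgl_apply, Ne.symm hb]
    · simp
  have s2 : ∑ a, c ((2:ℂ) • esgl n a) * ((2:ℂ) • esgl n a) i * ((2:ℂ) • esgl n a) p *
        ((2:ℂ) • esgl n a) k * ccot (ev ((2:ℂ) • esgl n a) x)
      = if i = p ∧ p = k then
          m i * ((8 * s + 4 * q * ((m i : ℂ) - 1)) * ccot (2 * x i)) else 0 := by
    rw [Finset.sum_eq_single i]
    · rw [hc2, ev_two]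
      simp only [BC_esgl_apply, Pi.smul_apply]
      by_cases h1 : i = p
      · subst h1
        by_cases h2 : i = k
        · subst h2; simp; ring
        · simp [h2, Ne.symm h2]
      · simp [h1, Ne.symm h1]
    · intro b _ hb
      simp [BC_esgl_apply, Ne.symm hb]
    · simp
  rw [s1, s2]
  have s5 : ∑ b, V i b + ∑ b, W i b = m i * (q * ∑ b, (m b : ℂ) * BCU x b i) := by
    rw [← Finset.sum_add_distrib, Finset.mul_sum, Finset.mul_sum]
    refine Finset.sum_congr rfl fun b _ => ?_
    rw [hU']; ring
  have e1 : ∀ (P : Prop) [Decidable P] (u v : ℂ),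
      (if P then u - v else 0) = (if P then u else 0) - (if P then v else 0) := by
    intro P _ u v; split_ifs <;> simp
  have e2 : ∀ (P : Prop) [Decidable P] (u v : ℂ),
      (if P then u + v else 0) = (if P then u else 0) + (if P then v else 0) := by
    intro P _ u v; split_ifs <;> simp
  simp only [BCT, ← hU, BCa, mul_add, ← s5, e1, e2]
  ring

lemma BCT_diag {n : ℕ} (m : Fin n → ℕ) (r s q : ℂ) (x : Fin n → ℂ) (i k : Fin n) :
    BCT m r s q x i i k = (if i = k then m i * BCa m r s q x i else 0)
      + q * m i * m k * BCU x i k := by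
  by_cases h : i = k
  · subst h; simp [BCT, BCU_self]
  · simp [BCT, h]

lemma BCT_off {n : ℕ} (m : Fin n → ℕ) (r s q : ℂ) (x : Fin n → ℂ) (i p k : Fin n)
    (h : i ≠ p) :
    BCT m r s q x i p k = (if i = k then q * m i * m p * BCU x i p else 0)
      + (if p = k then q * m i * m p * BCU x p i else 0) := by
  simp only [BCT, h, false_and, if_false, zero_add]
  congr 1
  split_ifs
  · ring
  · rfl

lemma BCT_swap12 {n : ℕ} (m : Fin n → ℕ) (r s q : ℂ) (x : Fin n → ℂ) (i p k : Fin n) :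
    BCT m r s q x i p k = BCT m r s q x p i k := by
  by_cases h : i = p
  · subst h; rfl
  · rw [BCT_off _ _ _ _ _ _ _ _ h, BCT_off _ _ _ _ _ _ _ _ (Ne.symm h), add_comm]
    split_ifs <;> ring

lemma BCT_swap23 {n : ℕ} (m : Fin n → ℕ) (r s q : ℂ) (x : Fin n → ℂ) (i p k : Fin n) :
    BCT m r s q x i p k = BCT m r s q x i k p := by
  by_cases h : p = k
  · subst h; rfl
  · simp only [BCT, h, Ne.symm h, and_false, if_false]
    ring

/-- The commutator tensor. -/
def BCE {n : ℕ} (m : Fin n → ℕ) (r s q : ℂ) (x : Fin n → ℂ) (i j p l : Fin n) : ℂ :=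
  ∑ k, (BCT m r s q x i p k * BCT m r s q x j l k
    - BCT m r s q x j p k * BCT m r s q x i l k) / (m k : ℂ)

lemma BCE_anti {n : ℕ} (m : Fin n → ℕ) (r s q : ℂ) (x : Fin n → ℂ) (i j p l : Fin n) :
    BCE m r s q x i j p l = - BCE m r s q x j i p l := by
  rw [BCE, BCE, ← Finset.sum_neg_distrib]
  refine Finset.sum_congr rfl fun k _ => ?_
  ring

lemma BCE_anti' {n : ℕ} (m : Fin n → ℕ) (r s q : ℂ) (x : Fin n → ℂ) (i j p l : Fin n) :
    BCE m r s q x i j p l = - BCE m r s q x i j l p := by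
  rw [BCE, BCE, ← Finset.sum_neg_distrib]
  refine Finset.sum_congr rfl fun k _ => ?_
  ring

lemma BCE_three {n : ℕ} (m : Fin n → ℕ) (hm : ∀ i, 0 < m i) (r s q : ℂ) (x : Fin n → ℂ)
    (hC : ∀ i j, i ≠ j → Complex.cos (2 * x i) - Complex.cos (2 * x j) ≠ 0)
    (i j l : Fin n) (hij : i ≠ j) (hil : i ≠ l) (hjl : j ≠ l) :
    BCE m r s q x i j i l = 0 := by
  have hm' : ∀ i, (m i : ℂ) ≠ 0 := fun i => by exact_mod_cast (hm i).ne'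
  have e : ∀ k, (BCT m r s q x i i k * BCT m r s q x j l k
    - BCT m r s q x j i k * BCT m r s q x i l k) / (m k : ℂ) =
      q ^ 2 * m i * m j * m l * ((if j = k then BCU x i j * BCU x j l else 0)
      + (if l = k then BCU x i l * BCU x l j else 0)
      - (if i = k then BCU x i j * BCU x i l else 0)) := by
    intro k
    rw [BCT_diag, BCT_off _ _ _ _ _ _ _ _ hjl, BCT_off _ _ _ _ _ _ _ _ hij.symm,
      BCT_off _ _ _ _ _ _ _ _ hil]
    have := hm' k
    by_cases h1 : i = k
    · subst h1
      simp [hij.symm, hil.symm]; field_simp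
    · by_cases h2 : j = k
      · subst h2
        simp [hij, hjl.symm]; field_simp
      · by_cases h3 : l = k
        · subst h3
          simp [hil, hjl]; field_simp
        · simp [h1, h2, h3]
  rw [BCE, Finset.sum_congr rfl fun k _ => e k, ← Finset.mul_sum]
  simp only [Finset.sum_add_distrib, Finset.sum_sub_distrib, Finset.sum_ite_eq, Finset.mem_univ,
    if_true]
  have h1 := hC i j hij
  have h2 := hC i l hil
  have h3 := hC j l hjl
  have h4 := hC l j hjl.symm
  have : BCU x i j * BCU x j l + BCU x i l * BCU x l j - BCU x i j * BCU x i l = 0 := by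
    unfold BCU
    generalize Complex.cos (2 * x i) = ci at *
    generalize Complex.cos (2 * x j) = cj at *
    generalize Complex.cos (2 * x l) = cl at *
    rw [show cl - cj = - (cj - cl) by ring]
    field_simp
    ring
  rw [this, mul_zero]

lemma BCE_four {n : ℕ} (m : Fin n → ℕ) (r s q : ℂ) (x : Fin n → ℂ)
    (i j p l : Fin n) (hij : i ≠ j) (hil : i ≠ l) (hjl : j ≠ l) (hip : i ≠ p) (hjp : j ≠ p)
    (hpl : p ≠ l) :
    BCE m r s q x i j p l = 0 := by
  refine Finset.sum_eq_zero fun k _ => ?_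
  rw [BCT_off _ _ _ _ _ _ _ _ hip, BCT_off _ _ _ _ _ _ _ _ hjl, BCT_off _ _ _ _ _ _ _ _ hjp,
      BCT_off _ _ _ _ _ _ _ _ hil]
  by_cases h1 : i = k
  · subst h1; simp [hij.symm, hil.symm, hip.symm]
  · by_cases h2 : p = k
    · subst h2; simp [hip, hjp, hpl.symm]
    · by_cases h3 : j = k
      · subst h3; simp [hij, hjp.symm, hjl.symm]
      · simp [h1, h2, h3]

lemma ccot_two (z : ℂ) : ccot (2 * z) = Complex.cos (2 * z) / Complex.sin (2 * z) := rfl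

lemma ccot_half (z : ℂ) (h : Complex.sin (2 * z) ≠ 0) :
    ccot z = (1 + Complex.cos (2 * z)) / Complex.sin (2 * z) := by
  have e := Complex.sin_two_mul z
  have h1 : Complex.sin z ≠ 0 := by
    intro h0; apply h; rw [e, h0]; ring
  rw [ccot, div_eq_div_iff h1 h, e, Complex.cos_two_mul]
  ring

lemma BCE_two {n : ℕ} (m : Fin n → ℕ) (hm : ∀ i, 0 < m i) (r s q : ℂ) (x : Fin n → ℂ)
    (hS : ∀ i, Complex.sin (2 * x i) ≠ 0)
    (hC : ∀ i j, i ≠ j → Complex.cos (2 * x i) - Complex.cos (2 * x j) ≠ 0)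
    (i j : Fin n) (hij : i ≠ j) :
    BCE m r s q x i j i j =
      -2 * (q * (r + 8 * s + 2 * ((∑ k, (m k : ℂ)) - 2) * q)) * m i * m j := by
  have hm' : ∀ i, (m i : ℂ) ≠ 0 := fun i => by exact_mod_cast (hm i).ne'
  have e : ∀ k, (BCT m r s q x i i k * BCT m r s q x j j k
    - BCT m r s q x j i k * BCT m r s q x i j k) / (m k : ℂ) =
      q * m i * m j * ((if i = k then BCa m r s q x i * BCU x j i - q * m j * BCU x i j ^ 2 else 0)
        + (if j = k then BCa m r s q x j * BCU x i j - q * m i * BCU x j i ^ 2 else 0)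
        + q * (m k * (BCU x i k * BCU x j k))) := by
    intro k
    rw [BCT_diag, BCT_diag, BCT_off _ _ _ _ _ _ _ _ hij.symm, BCT_off _ _ _ _ _ _ _ _ hij]
    have := hm' k
    by_cases h1 : i = k
    · subst h1
      simp [hij.symm, BCU_self]; field_simp
    · by_cases h2 : j = k
      · subst h2
        simp [hij, BCU_self]; field_simp
      · simp [h1, h2]; field_simp
  rw [BCE, Finset.sum_congr rfl fun k _ => e k, ← Finset.mul_sum]
  simp only [Finset.sum_add_distrib, Finset.sum_ite_eq, Finset.mem_univ, if_true,
    ← Finset.mul_sum]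
  have h1 := hC i j hij
  have h1' := hC j i hij.symm
  have t : ∀ k, (m k : ℂ) * (BCU x j i * BCU x k i + BCU x i j * BCU x k j
      + BCU x i k * BCU x j k) = -4 * m k + (if i = k then m i * (BCU x i j ^ 2 + 4) else 0)
        + (if j = k then m j * (BCU x j i ^ 2 + 4) else 0) := by
    intro k
    by_cases hk : i = k
    · subst hk
      simp [hij.symm, BCU_self]; ring
    by_cases hk' : j = k
    · subst hk'
      simp [hij, BCU_self]; ring
    simp only [hk, hk', if_false, add_zero]
    rw [mul_comm]
    congr 1
    have h2 := hC i k hk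
    have h3 := hC j k hk'
    have e1 := Complex.sin_sq_add_cos_sq (2 * x i)
    have e2 := Complex.sin_sq_add_cos_sq (2 * x j)
    have e3 := Complex.sin_sq_add_cos_sq (2 * x k)
    unfold BCU
    clear hC h1' hS
    generalize Complex.cos (2 * x i) = ci at *
    generalize Complex.cos (2 * x j) = cj at *
    generalize Complex.cos (2 * x k) = ck at *
    generalize Complex.sin (2 * x i) = si at *
    generalize Complex.sin (2 * x j) = sj at *
    generalize Complex.sin (2 * x k) = sk at *
    rw [show ck - ci = - (ci - ck) by ring, show ck - cj = - (cj - ck) by ring,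
      show cj - ci = - (ci - cj) by ring]
    field_simp
    linear_combination 4 * ((cj - ck) * e1 - (ci - ck) * e2 + (ci - cj) * e3)
  have t' := Finset.sum_congr rfl fun k (_ : k ∈ (Finset.univ : Finset (Fin n))) => t k
  simp only [Finset.sum_add_distrib, Finset.sum_ite_eq, Finset.mem_univ, if_true,
    ← Finset.mul_sum, mul_add] at t'
  have t1 : ∑ k, (m k : ℂ) * (BCU x j i * BCU x k i) = BCU x j i * ∑ k, (m k : ℂ) * BCU x k i := by
    rw [Finset.mul_sum]; exact Finset.sum_congr rfl fun k _ => by ring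
  have t2 : ∑ k, (m k : ℂ) * (BCU x i j * BCU x k j) = BCU x i j * ∑ k, (m k : ℂ) * BCU x k j := by
    rw [Finset.mul_sum]; exact Finset.sum_congr rfl fun k _ => by ring
  rw [t1, t2] at t'
  have c1 : BCU x j i * ccot (x i) + BCU x i j * ccot (x j) = -2 := by
    rw [ccot_half _ (hS i), ccot_half _ (hS j)]
    have := hS i
    have := hS j
    unfold BCU
    clear hC
    generalize Complex.cos (2 * x i) = ci at *
    generalize Complex.cos (2 * x j) = cj at *
    rw [show cj - ci = - (ci - cj) by ring]
    field_simp
    ring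
  -- the two remaining identities
  have c2 : BCU x j i * ccot (2 * x i) = (BCU x j i ^ 2 - BCU x i j ^ 2) / 4 - 1 := by
    rw [ccot_two]
    have := hS i
    have e1 := Complex.sin_sq_add_cos_sq (2 * x i)
    have e2 := Complex.sin_sq_add_cos_sq (2 * x j)
    unfold BCU
    clear hC hS
    generalize Complex.cos (2 * x i) = ci at *
    generalize Complex.cos (2 * x j) = cj at *
    generalize Complex.sin (2 * x i) = si at *
    generalize Complex.sin (2 * x j) = sj at *
    rw [show cj - ci = - (ci - cj) by ring]
    field_simp
    linear_combination 4 * (e2 - e1)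
  have c3 : BCU x i j * ccot (2 * x j) = (BCU x i j ^ 2 - BCU x j i ^ 2) / 4 - 1 := by
    rw [ccot_two]
    have := hS j
    have e1 := Complex.sin_sq_add_cos_sq (2 * x i)
    have e2 := Complex.sin_sq_add_cos_sq (2 * x j)
    unfold BCU
    clear hC hS
    generalize Complex.cos (2 * x i) = ci at *
    generalize Complex.cos (2 * x j) = cj at *
    generalize Complex.sin (2 * x i) = si at *
    generalize Complex.sin (2 * x j) = sj at *
    rw [show cj - ci = - (ci - cj) by ring]
    field_simp
    linear_combination 4 * (e1 - e2)
  unfold BCa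
  linear_combination q * m i * m j * (r * c1 + (8 * s + 4 * q * ((m i : ℂ) - 1)) * c2
    + (8 * s + 4 * q * ((m j : ℂ) - 1)) * c3 + q * t')

lemma BCE_eq {n : ℕ} (m : Fin n → ℕ) (hm : ∀ i, 0 < m i) (r s q : ℂ) (x : Fin n → ℂ)
    (hS : ∀ i, Complex.sin (2 * x i) ≠ 0)
    (hC : ∀ i j, i ≠ j → Complex.cos (2 * x i) - Complex.cos (2 * x j) ≠ 0)
    (i j p l : Fin n) :
    BCE m r s q x i j p l =
      -2 * (q * (r + 8 * s + 2 * ((∑ k, (m k : ℂ)) - 2) * q)) * m i * m j *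
        ((if i = p ∧ j = l then 1 else 0) - (if j = p ∧ i = l then 1 else 0)) := by
  by_cases hij : i = j
  · subst hij
    simp [BCE]
  by_cases hpl : p = l
  · subst hpl
    have : BCE m r s q x i j p p = 0 := by
      refine Finset.sum_eq_zero fun k _ => ?_
      ring
    rw [this]
    by_cases h1 : i = p <;> by_cases h2 : j = p <;> simp [h1, h2]
  by_cases h1 : i = p
  · subst h1
    by_cases h2 : j = l
    · subst h2
      rw [BCE_two m hm r s q x hS hC i j hij]
      simp [Ne.symm hij]
    · rw [BCE_three m hm r s q x hC i j l hij hpl h2]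
      simp [h2, Ne.symm hij]
  by_cases h2 : j = p
  · subst h2
    rw [BCE_anti]
    by_cases h3 : i = l
    · subst h3
      rw [BCE_two m hm r s q x hS hC j i (Ne.symm hij)]
      simp [hij]; ring
    · rw [BCE_three m hm r s q x hC j i l (Ne.symm hij) hpl h3]
      simp [hij, h3]
  simp only [h1, h2, false_and, if_false, sub_zero, mul_zero]
  by_cases h3 : i = l
  · subst h3
    rw [BCE_anti', BCE_three m hm r s q x hC i j p hij h1 h2, neg_zero]
  by_cases h4 : j = l
  · subst h4
    rw [BCE_anti', BCE_anti, BCE_three m hm r s q x hC j i p (Ne.symm hij) h2 h1]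
    simp
  exact BCE_four m r s q x i j p l hij h3 h4 h1 h2 hpl

lemma BC_gram {n : ℕ} (m : Fin n → ℕ) (r s q : ℂ) (c : (Fin n → ℂ) → ℂ)
    (hc1 : ∀ i : Fin n, c (esgl n i) = r * (m i : ℂ))
    (hc2 : ∀ i : Fin n, c ((2 : ℂ) • esgl n i) =
      s * (m i : ℂ) + q * (m i : ℂ) * ((m i : ℂ) - 1) / 2)
    (hc3 : ∀ i j : Fin n, i < j →
      c (esgl n i + esgl n j) = q * (m i : ℂ) * (m j : ℂ) ∧
      c (esgl n i - esgl n j) = q * (m i : ℂ) * (m j : ℂ)) (i p : Fin n) :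
    ∑ α ∈ BCfin n, c α * α i * α p =
      if i = p then (r + 4 * s + 2 * q * ((∑ k, (m k : ℂ)) - 1)) * m i else 0 := by
  rw [BC_sum_split, add_assoc]
  set g : Fin n → Fin n → ℂ := fun a b => if a = b then 0 else
    2 * q * m a * m b * ((if i = a then (if p = a then 1 else 0) else 0)
      + (if i = b then (if p = b then 1 else 0) else 0)) with hg
  have hgs : ∀ a b, g a b = g b a := by
    intro a b
    by_cases h : a = b
    · simp [h]
    · simp only [hg, if_neg h, if_neg (Ne.symm h)]; ring
  have hgz : ∀ a, g a a = 0 := by simp [hg]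
  have s3 : ∑ y ∈ Finset.univ.filter (fun p : Fin n × Fin n => p.1 < p.2),
      (c (esgl n y.1 + esgl n y.2) * (esgl n y.1 + esgl n y.2) i * (esgl n y.1 + esgl n y.2) p
      + c (esgl n y.1 - esgl n y.2) * (esgl n y.1 - esgl n y.2) i * (esgl n y.1 - esgl n y.2) p)
      = ∑ y ∈ Finset.univ.filter (fun p : Fin n × Fin n => p.1 < p.2), g y.1 y.2 := by
    refine Finset.sum_congr rfl fun y hy => ?_
    have hy' := (Finset.mem_filter.1 hy).2
    rw [(hc3 _ _ hy').1, (hc3 _ _ hy').2]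
    have hi : ∀ (P Q : Prop) [Decidable P] [Decidable Q],
      (if P then (if Q then (1:ℂ) else 0) else 0) =
      (if P then 1 else 0) * (if Q then 1 else 0) := by
      intro P Q _ _
      by_cases P <;> by_cases Q <;> simp [*]
    simp only [hg, if_neg hy'.ne, Pi.add_apply, Pi.sub_apply, BC_esgl_apply, hi]
    ring
  have s4 := BC_pair_sum g hgs hgz
  have s5 : ∑ a, ∑ b, g a b =
      2 * (if i = p then 2 * q * m i * ((∑ k, (m k : ℂ)) - m i) else 0) := by
    have e : ∀ a b, g a b = (if i = a then (if p = a then 2 * q * m a * m b else 0) else 0)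
        + (if i = b then (if p = b then 2 * q * m a * m b else 0) else 0)
        - (if i = a then (if p = a then (if a = b then 4 * q * m a * m b else 0) else 0) else 0) := by
      intro a b
      simp only [hg]
      by_cases h : a = b
      · subst h
        by_cases h1 : i = a <;> by_cases h2 : p = a <;> simp [h1, h2]
        ring
      · by_cases h1 : i = a <;> by_cases h2 : p = a <;> by_cases h3 : i = b <;>
          by_cases h4 : p = b <;> simp [h, h1, h2, h3, h4] <;> simp_all
    simp only [e, Finset.sum_add_distrib, Finset.sum_sub_distrib]
    simp only [Finset.sum_ite_eq, Finset.sum_ite_irrel, Finset.sum_const_zero, Finset.mem_univ,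
      if_true]
    by_cases h : i = p
    · subst h
      simp only [if_true]
      rw [← Finset.mul_sum, ← Finset.sum_mul, ← Finset.mul_sum]
      ring
    · simp [h, Ne.symm h]
  rw [Finset.sum_add_distrib] at s3
  rw [s3, mul_left_cancel₀ two_ne_zero (s4.trans s5)]
  have s1 : ∑ a, c (esgl n a) * esgl n a i * esgl n a p
      = if i = p then m i * r else 0 := by
    rw [Finset.sum_eq_single i]
    · rw [hc1]
      by_cases h1 : i = p
      · subst h1
        simp [BC_esgl_apply]; ring
      · simp [BC_esgl_apply, h1, Ne.symm h1]
    · intro b _ hb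
      simp [BC_esgl_apply, Ne.symm hb]
    · simp
  have s2 : ∑ a, c ((2:ℂ) • esgl n a) * ((2:ℂ) • esgl n a) i * ((2:ℂ) • esgl n a) p
      = if i = p then m i * (4 * s + 2 * q * ((m i : ℂ) - 1)) else 0 := by
    rw [Finset.sum_eq_single i]
    · rw [hc2]
      by_cases h1 : i = p
      · subst h1
        simp [BC_esgl_apply]; ring
      · simp [BC_esgl_apply, h1, Ne.symm h1]
    · intro b _ hb
      simp [BC_esgl_apply, Ne.symm hb]
    · simp
  rw [s1, s2]
  by_cases h : i = p
  · simp only [h, if_true]; ring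
  · simp [h]

/-- The explicit inverse of `Flast`. -/
def BCinv {n : ℕ} (m : Fin n → ℕ) (h : ℂ) : Matrix (Fin n ⊕ Unit) (Fin n ⊕ Unit) ℂ :=
  Matrix.diagonal (Sum.elim (fun i => (2 * (h * m i))⁻¹) (fun _ => 2⁻¹))

/-- the restricted configuration `BC_n(r,s,q; m)` (obtained from
`BC_N⁺(r,s,q)` with `N = Σ mᵢ`) satisfies the trigonometric WDVV equations, and its
quadratic part is `h Σ mᵢ ξᵢ²` with `h = r + 4s + 2q(N-1)`. -/
theorem BC_restricted_satisfies_WDVV (n : ℕ) (hn : 1 ≤ n) (m : Fin n → ℕ)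
    (hm : ∀ i, 0 < m i) (N : ℕ) (hN : N = ∑ i, m i) (r s q lam : ℂ)
    (hmi : ∀ i, r + 4 * s + 2 * q * ((m i : ℂ) - 1) ≠ 0)
    (hq : q * (r + 8 * s + 2 * ((N : ℂ) - 2) * q) ≠ 0)
    (hh : r + 4 * s + 2 * q * ((N : ℂ) - 1) ≠ 0)
    (hlam : lam ^ 2 = 2 * (r + 4 * s + 2 * q * ((N : ℂ) - 1)) ^ 3 /
      (q * (r + 8 * s + 2 * ((N : ℂ) - 2) * q)))
    (c : (Fin n → ℂ) → ℂ)
    (hc1 : ∀ i : Fin n, c (esgl n i) = r * (m i : ℂ))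
    (hc2 : ∀ i : Fin n, c ((2 : ℂ) • esgl n i) =
      s * (m i : ℂ) + q * (m i : ℂ) * ((m i : ℂ) - 1) / 2)
    (hc3 : ∀ i j : Fin n, i < j →
      c (esgl n i + esgl n j) = q * (m i : ℂ) * (m j : ℂ) ∧
      c (esgl n i - esgl n j) = q * (m i : ℂ) * (m j : ℂ)) :
    SatisfiesWDVV (BCfin n) c lam ∧
      ∀ ξ : Fin n → ℂ, (∑ α ∈ BCfin n, c α * ev α ξ ^ 2) =
        (r + 4 * s + 2 * q * ((N : ℂ) - 1)) * ∑ i, (m i : ℂ) * ξ i ^ 2 := by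
  have hm' : ∀ i, (m i : ℂ) ≠ 0 := fun i => by exact_mod_cast (hm i).ne'
  have hNs : (N : ℂ) = ∑ k, (m k : ℂ) := by rw [hN]; push_cast; rfl
  have G := BC_gram m r s q c hc1 hc2 hc3
  rw [← hNs] at G
  set h := r + 4 * s + 2 * q * ((N : ℂ) - 1) with hdef
  have hF : Flast (BCfin n) c =
      Matrix.diagonal (Sum.elim (fun i => 2 * (h * m i)) (fun _ => 2)) := by
    ext a b
    rcases a with a | a <;> rcases b with b | b
    · simp only [Flast, Matrix.of_apply, G, Matrix.diagonal_apply, Sum.inl.injEq, Sum.elim_inl]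
      split_ifs <;> simp
    · simp [Flast]
    · simp [Flast]
    · simp [Flast]
  have hinv1 : Flast (BCfin n) c * BCinv m h = 1 := by
    rw [hF, BCinv, Matrix.diagonal_mul_diagonal, ← Matrix.diagonal_one]
    congr 1
    ext a
    rcases a with a | a
    · simp only [Sum.elim_inl]
      exact mul_inv_cancel₀ (mul_ne_zero two_ne_zero (mul_ne_zero hh (hm' a)))
    · simp
  have hinv : (Flast (BCfin n) c)⁻¹ = BCinv m h := Matrix.inv_eq_right_inv hinv1
  refine ⟨⟨?_, ?_⟩, ?_⟩
  · exact IsUnit.of_mul_eq_one _ hinv1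
  · intro x hx i j
    obtain ⟨-, hS, hx3⟩ := BC_regular x hx
    have hC : ∀ i j, i ≠ j → Complex.cos (2 * x i) - Complex.cos (2 * x j) ≠ 0 := by
      intro i j hij
      rw [BC_sinsin]
      exact mul_ne_zero (by norm_num) (mul_ne_zero (hx3 i j hij).1 (hx3 i j hij).2)
    have T := BC_tensor m r s q c hc1 hc2 hc3 x hx
    rw [hinv, BCinv]
    ext a b
    have expand : ∀ i j, (Fmat (BCfin n) c lam i x *
        Matrix.diagonal (Sum.elim (fun i => (2 * (h * m i))⁻¹) (fun _ => 2⁻¹)) *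
        Fmat (BCfin n) c lam j x : Matrix (Fin n ⊕ Unit) (Fin n ⊕ Unit) ℂ) a b =
        ∑ k, Fmat (BCfin n) c lam i x a (Sum.inl k) * (2 * (h * m k))⁻¹ *
          Fmat (BCfin n) c lam j x (Sum.inl k) b
        + Fmat (BCfin n) c lam i x a (Sum.inr ()) * 2⁻¹ *
          Fmat (BCfin n) c lam j x (Sum.inr ()) b := by
      intro i j
      rw [Matrix.mul_apply, Fintype.sum_sum_type]
      simp [Matrix.mul_diagonal]
    rw [expand, expand]
    rcases a with p | u <;> rcases b with l | v
    · simp only [Fmat, Matrix.of_apply, G, T]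
      have E := BCE_eq m hm r s q x hS hC i j p l
      rw [← hNs] at E
      set K := q * (r + 8 * s + 2 * ((N : ℂ) - 2) * q) with hK
      have e : ∑ k, lam * BCT m r s q x i p k * (2 * (h * m k))⁻¹ * (lam * BCT m r s q x j k l)
          - ∑ k, lam * BCT m r s q x j p k * (2 * (h * m k))⁻¹ * (lam * BCT m r s q x i k l)
          = lam ^ 2 / (2 * h) * BCE m r s q x i j p l := by
        rw [BCE, Finset.mul_sum, ← Finset.sum_sub_distrib]
        refine Finset.sum_congr rfl fun k _ => ?_
        rw [BCT_swap23 m r s q x j k l, BCT_swap23 m r s q x i k l]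
        have := hm' k
        field_simp
      have d : ∀ a b c d : Fin n, ∀ u v : ℂ, (if a = b ∧ c = d then (1 : ℂ) else 0) * (u * v) =
          (if a = b then u else 0) * (if c = d then v else 0) := by
        intro a b c d u v
        by_cases h1 : a = b <;> by_cases h2 : c = d <;> simp [h1, h2]
      have d1 := d i p j l (h * m i) (h * m j)
      have d2 := d j p i l (h * m j) (h * m i)
      have hl : lam ^ 2 / (2 * h) * (-2 * K) = -2 * h ^ 2 := by
        rw [hlam]; field_simp
      rw [E] at e
      linear_combination e - 2 * d1 + 2 * d2 + m i * m j *
        ((if i = p ∧ j = l then 1 else 0) - (if j = p ∧ i = l then 1 else 0)) * hl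
    · simp only [Fmat, Matrix.of_apply, G, T]
      simp
      have h1 := hm' i
      have h2 := hm' j
      rw [BCT_swap12 m r s q x i p j, BCT_swap23 m r s q x p i j, BCT_swap12 m r s q x p j i]
      field_simp
    · simp only [Fmat, Matrix.of_apply, G, T]
      simp
      have h1 := hm' i
      have h2 := hm' j
      rw [BCT_swap12 m r s q x i j l]
      field_simp
    · simp only [Fmat, Matrix.of_apply, G, T]
      simp
      by_cases hij : i = j
      · subst hij; rfl
      · simp [hij, Ne.symm hij]
  · intro ξ
    have e : ∀ α ∈ BCfin n, c α * ev α ξ ^ 2 = ∑ i, ∑ p, ξ i * ξ p * (c α * α i * α p) := by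
      intro α _
      rw [ev, sq, Finset.sum_mul_sum, Finset.mul_sum]
      refine Finset.sum_congr rfl fun a _ => ?_
      rw [Finset.mul_sum]
      exact Finset.sum_congr rfl fun b _ => by ring
    rw [Finset.sum_congr rfl e, Finset.sum_comm, Finset.mul_sum]
    refine Finset.sum_congr rfl fun a _ => ?_
    rw [Finset.sum_comm]
    simp only [← Finset.mul_sum, G]
    simp
    ring

end
end

section
/- Let N ≥ 1 and t ∈ ℂ, t ≠ 0. Then for all u, v in the hyperplane V = {x ∈ ℂ^{N+1} : Σ_{i=1}^{N+1} x_i = 0}: (i) Σ_{α,β ∈ A_N⁺} t² (α(u)β(v) − α(v)β(u))² = (N+1)² t² Σ_{i,j=1}^{N+1} (u_i v_j − u_j v_i)²; and (ii) Σ_{α,β ∈ A_N⁺} ⟨α,β⟩ (α(u)β(v) − α(v)β(u))² = (N+1) Σ_{i,j=1}^{N+1} (u_i v_j − u_j v_i)², where for α = e^i − e^j and β = e^k − e^l one sets ⟨α,β⟩ = δ_{ik} − δ_{il} − δ_{jk} + δ_{jl}. -/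
open Finset

noncomputable section

/-- The covector `e^i - e^j` of `A_N⁺` attached to a pair `(i, j)`, `i < j`. -/
def aroot (N : ℕ) (p : Fin (N + 1) × Fin (N + 1)) : Fin (N + 1) → ℂ :=
  esgl (N + 1) p.1 - esgl (N + 1) p.2

theorem wedge_aroot (N : ℕ) (p q : Fin (N + 1) × Fin (N + 1)) (u v : Fin (N + 1) → ℂ) :
    wedge (aroot N p) (aroot N q) u v =
      (u p.1 - u p.2) * (v q.1 - v q.2) - (v p.1 - v p.2) * (u q.1 - u q.2) := by
  simp [wedge, ev, aroot, esgl, sub_mul, Finset.sum_sub_distrib, Pi.single_apply]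

theorem gram_sum {ι : Type*} (s : Finset ι) (a b : ι → ℂ) :
    ∑ p ∈ s, ∑ q ∈ s, (a p * b q - b p * a q) ^ 2 =
      2 * ((∑ p ∈ s, a p * a p) * (∑ p ∈ s, b p * b p) - (∑ p ∈ s, a p * b p) ^ 2) := by
  have h : ∀ p q, (a p * b q - b p * a q) ^ 2 =
      (a p * a p) * (b q * b q) + (b p * b p) * (a q * a q)
        - 2 * ((a p * b p) * (a q * b q)) := by intros; ring
  simp only [h, Finset.sum_add_distrib, Finset.sum_sub_distrib, ← Finset.mul_sum,
    ← Finset.sum_mul]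
  ring

theorem half_sum (n : ℕ) (f : Fin n → Fin n → ℂ) (hs : ∀ i j, f i j = f j i)
    (hd : ∀ i, f i i = 0) :
    2 * ∑ p ∈ Finset.univ.filter (fun p : Fin n × Fin n => p.1 < p.2), f p.1 p.2 =
      ∑ i, ∑ j, f i j := by
  rw [Finset.sum_filter, Fintype.sum_prod_type, two_mul]
  nth_rw 2 [Finset.sum_comm]
  simp only [← Finset.sum_add_distrib]
  refine Finset.sum_congr rfl fun i _ => Finset.sum_congr rfl fun j _ => ?_
  rcases lt_trichotomy i j with h | h | h
  · simp [h, h.not_gt]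
  · subst h; simp [hd]
  · simp [h, h.not_gt, hs i j]

theorem root_gram (N : ℕ) (x y : Fin (N + 1) → ℂ) (hx : ∑ i, x i = 0) (hy : ∑ i, y i = 0) :
    ∑ p ∈ Finset.univ.filter (fun p : Fin (N + 1) × Fin (N + 1) => p.1 < p.2),
      (x p.1 - x p.2) * (y p.1 - y p.2) = ((N : ℂ) + 1) * ∑ i, x i * y i := by
  have h := half_sum (N + 1) (fun i j => (x i - x j) * (y i - y j))
    (by intros; ring) (by intros; ring)
  have e : ∑ i, ∑ j, (x i - x j) * (y i - y j) = 2 * (((N : ℂ) + 1) * ∑ i, x i * y i) := by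
    have z : ∀ i j, (x i - x j) * (y i - y j) =
        x i * y i + x j * y j - x i * y j - x j * y i := by intros; ring
    simp only [z, Finset.sum_add_distrib, Finset.sum_sub_distrib, ← Finset.mul_sum,
      ← Finset.sum_mul, hx, hy, Finset.sum_const, Finset.card_univ, Fintype.card_fin, nsmul_eq_mul]
    simp only [mul_left_comm (x _), ← Finset.mul_sum]
    push_cast
    ring
  rw [e] at h
  exact mul_left_cancel₀ two_ne_zero h

/-- indicator of `i < j` -/
def ilt {n : ℕ} (i j : Fin n) : ℂ := if i < j then 1 else 0

/-- reduction of the signed sum over pairs of roots to a sum over triples -/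
theorem signed_sum (n : ℕ) (D : Fin n → Fin n → Fin n → Fin n → ℂ)
    (h1 : ∀ i j k l, D i j k l = D j i k l) (h2 : ∀ i j k l, D i j k l = D i j l k) :
    ∑ p ∈ Finset.univ.filter (fun p : Fin n × Fin n => p.1 < p.2),
        ∑ q ∈ Finset.univ.filter (fun q : Fin n × Fin n => q.1 < q.2),
          ((if p.1 = q.1 then (1 : ℂ) else 0) - (if p.1 = q.2 then 1 else 0) -
            (if p.2 = q.1 then 1 else 0) + (if p.2 = q.2 then 1 else 0)) *
            D p.1 p.2 q.1 q.2 =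
      ∑ a, ∑ b, ∑ c, (ilt a b - ilt b a) * (ilt a c - ilt c a) * D a b a c := by
  have e : ∀ i j k l : Fin n, (if i < j then (if k < l then
        ((if i = k then (1 : ℂ) else 0) - (if i = l then 1 else 0) -
            (if j = k then 1 else 0) + (if j = l then 1 else 0)) * D i j k l else 0) else 0) =
      (if i = k then ilt i j * ilt k l * D i j k l else 0)
      - (if i = l then ilt i j * ilt k l * D i j k l else 0)
      - (if j = k then ilt i j * ilt k l * D i j k l else 0)
      + (if j = l then ilt i j * ilt k l * D i j k l else 0) := by
    intro i j k l
    by_cases hij : i < j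
    · by_cases hkl : k < l
      · simp only [ilt, hij, hkl, if_true, add_mul, sub_mul, ite_mul, zero_mul, one_mul]
      · simp [ilt, hkl]
    · simp [ilt, hij]
  have e1 : ∑ i, ∑ j, ∑ k, ∑ l, (if i = k then ilt i j * ilt k l * D i j k l else 0) =
      ∑ a, ∑ b, ∑ c, ilt a b * ilt a c * D a b a c := by
    refine Finset.sum_congr rfl fun i _ => Finset.sum_congr rfl fun j _ => ?_
    rw [Finset.sum_comm]
    simp
  have e2 : ∑ i, ∑ j, ∑ k, ∑ l, (if i = l then ilt i j * ilt k l * D i j k l else 0) =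
      ∑ a, ∑ b, ∑ c, ilt a b * ilt c a * D a b a c := by
    refine Finset.sum_congr rfl fun i _ => Finset.sum_congr rfl fun j _ => ?_
    simp only [Finset.sum_ite_eq, Finset.mem_univ, if_true]
    exact Finset.sum_congr rfl fun k _ => by rw [h2]
  have e3 : ∑ i, ∑ j, ∑ k, ∑ l, (if j = k then ilt i j * ilt k l * D i j k l else 0) =
      ∑ a, ∑ b, ∑ c, ilt b a * ilt a c * D a b a c := by
    rw [Finset.sum_comm]
    refine Finset.sum_congr rfl fun i _ => Finset.sum_congr rfl fun j _ => ?_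
    rw [Finset.sum_comm]
    simp only [Finset.sum_ite_eq, Finset.mem_univ, if_true]
    exact Finset.sum_congr rfl fun k _ => by rw [h1]
  have e4 : ∑ i, ∑ j, ∑ k, ∑ l, (if j = l then ilt i j * ilt k l * D i j k l else 0) =
      ∑ a, ∑ b, ∑ c, ilt b a * ilt c a * D a b a c := by
    rw [Finset.sum_comm]
    refine Finset.sum_congr rfl fun i _ => Finset.sum_congr rfl fun j _ => ?_
    simp only [Finset.sum_ite_eq, Finset.mem_univ, if_true]
    exact Finset.sum_congr rfl fun k _ => by rw [h1, h2]
  have s0 : ∀ (i j : Fin n) (f : Fin n → Fin n → ℂ),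
      (if i < j then ∑ k, ∑ l, f k l else 0) = ∑ k, ∑ l, if i < j then f k l else 0 := by
    intro i j f
    split_ifs <;> simp
  simp only [Finset.sum_filter, Fintype.sum_prod_type, s0, e]
  simp only [Finset.sum_add_distrib, Finset.sum_sub_distrib, e1, e2, e3, e4]
  simp only [← Finset.sum_add_distrib, ← Finset.sum_sub_distrib]
  refine Finset.sum_congr rfl fun i _ => Finset.sum_congr rfl fun j _ =>
    Finset.sum_congr rfl fun k _ => ?_
  ring

theorem cyc_sign (n : ℕ) (a b c : Fin n) (hab : a ≠ b) (hac : a ≠ c) (hbc : b ≠ c) :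
    (ilt a b - ilt b a) * (ilt a c - ilt c a) + (ilt b c - ilt c b) * (ilt b a - ilt a b)
      + (ilt c a - ilt a c) * (ilt c b - ilt b c) = 1 := by
  unfold ilt
  rcases lt_or_gt_of_ne hab with h | h <;> rcases lt_or_gt_of_ne hac with h' | h' <;>
    rcases lt_or_gt_of_ne hbc with h'' | h'' <;>
    first
    | (exfalso; omega)
    | simp [h, h', h'', h.not_gt, h'.not_gt, h''.not_gt]

theorem cyc_sum (n : ℕ) (F : Fin n → Fin n → Fin n → ℂ) :
    ∑ a, ∑ b, ∑ c, F b c a = ∑ a, ∑ b, ∑ c, F a b c := by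
  rw [Finset.sum_comm]
  exact Finset.sum_congr rfl fun b _ => Finset.sum_comm

theorem triple_sum (n : ℕ) (W : Fin n → Fin n → Fin n → ℂ)
    (hc : ∀ a b c, W b c a = W a b c)
    (h0 : ∀ a b, W a a b = 0) :
    3 * ∑ a, ∑ b, ∑ c, (ilt a b - ilt b a) * (ilt a c - ilt c a) * W a b c =
      ∑ a, ∑ b, ∑ c, W a b c := by
  have k1 := cyc_sum n (fun a b c => (ilt a b - ilt b a) * (ilt a c - ilt c a) * W a b c)
  have k2 := cyc_sum n (fun a b c => (ilt b c - ilt c b) * (ilt b a - ilt a b) * W b c a)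
  have k : ∑ a, ∑ b, ∑ c, W a b c =
      ∑ a, ∑ b, ∑ c, (ilt a b - ilt b a) * (ilt a c - ilt c a) * W a b c
      + ∑ a, ∑ b, ∑ c, (ilt b c - ilt c b) * (ilt b a - ilt a b) * W b c a
      + ∑ a, ∑ b, ∑ c, (ilt c a - ilt a c) * (ilt c b - ilt b c) * W c a b := by
    simp only [← Finset.sum_add_distrib]
    refine Finset.sum_congr rfl fun a _ => Finset.sum_congr rfl fun b _ =>
      Finset.sum_congr rfl fun c _ => ?_
    rw [hc a b c, ← hc c a b]
    by_cases hab : a = b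
    · subst hab; simp [h0]
    by_cases hac : a = c
    · subst hac; rw [← hc a b a, ← hc b a a, h0]; simp
    by_cases hbc : b = c
    · subst hbc; rw [← hc a b b, h0]; simp
    linear_combination (-W a b c) * cyc_sign n a b c hab hac hbc
  rw [k, k2, k1]
  ring

/-- the `G^{(1)}`- and `G^{(2)}`-type identities for the root system
`A_N⁺ = {e^i - e^j : i < j}` on the hyperplane `Σ xᵢ = 0`. -/
theorem AN_form_identities (N : ℕ) (hN : 1 ≤ N) (t : ℂ) (ht : t ≠ 0)
    (u v : Fin (N + 1) → ℂ) (hu : ∑ i, u i = 0) (hv : ∑ i, v i = 0) :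
    (∑ p ∈ Finset.univ.filter (fun p : Fin (N + 1) × Fin (N + 1) => p.1 < p.2),
        ∑ q ∈ Finset.univ.filter (fun q : Fin (N + 1) × Fin (N + 1) => q.1 < q.2),
          t ^ 2 * wedge (aroot N p) (aroot N q) u v ^ 2 =
      ((N : ℂ) + 1) ^ 2 * t ^ 2 *
        ∑ i, ∑ j, (u i * v j - u j * v i) ^ 2) ∧
    (∑ p ∈ Finset.univ.filter (fun p : Fin (N + 1) × Fin (N + 1) => p.1 < p.2),
        ∑ q ∈ Finset.univ.filter (fun q : Fin (N + 1) × Fin (N + 1) => q.1 < q.2),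
          ((if p.1 = q.1 then (1 : ℂ) else 0) - (if p.1 = q.2 then 1 else 0) -
            (if p.2 = q.1 then 1 else 0) + (if p.2 = q.2 then 1 else 0)) *
            wedge (aroot N p) (aroot N q) u v ^ 2 =
      ((N : ℂ) + 1) * ∑ i, ∑ j, (u i * v j - u j * v i) ^ 2) := by
  clear hN ht
  constructor
  · simp only [wedge_aroot, ← Finset.mul_sum]
    rw [gram_sum _ (fun p : Fin (N + 1) × Fin (N + 1) => u p.1 - u p.2)
      (fun p : Fin (N + 1) × Fin (N + 1) => v p.1 - v p.2)]
    simp only [root_gram N u u hu hu, root_gram N v v hv hv, root_gram N u v hu hv]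
    have h := gram_sum Finset.univ u v
    simp only [mul_comm (v _) (u _)] at h
    rw [h]
    ring
  · simp only [wedge_aroot]
    rw [signed_sum (N + 1) (fun i j k l =>
      ((u i - u j) * (v k - v l) - (v i - v j) * (u k - u l)) ^ 2)
      (by intros; ring) (by intros; ring)]
    have h := triple_sum (N + 1) (fun a b c =>
      ((u a - u b) * (v a - v c) - (v a - v b) * (u a - u c)) ^ 2)
      (by intros; ring) (by intros; ring)
    have e : ∑ a, ∑ b, ∑ c, ((u a - u b) * (v a - v c) - (v a - v b) * (u a - u c)) ^ 2 =
        3 * (((N : ℂ) + 1) * ∑ i, ∑ j, (u i * v j - u j * v i) ^ 2) := by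
      have x : ∀ a b c, ((u a - u b) * (v a - v c) - (v a - v b) * (u a - u c)) ^ 2 =
          (u a * v b - u b * v a) ^ 2 + (u b * v c - u c * v b) ^ 2
            + (u c * v a - u a * v c) ^ 2
          + 2 * ((u a * v b - u b * v a) * (u b * v c - u c * v b))
          + 2 * ((u b * v c - u c * v b) * (u c * v a - u a * v c))
          + 2 * ((u a * v b - u b * v a) * (u c * v a - u a * v c)) := by intros; ring
      have z1 : ∀ b, ∑ c, (u b * v c - u c * v b) = 0 := by
        intro b
        simp [Finset.sum_sub_distrib, ← Finset.mul_sum, ← Finset.sum_mul, hu, hv]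
      have z2 : ∀ b, ∑ c, (u c * v b - u b * v c) = 0 := by
        intro b
        simp [Finset.sum_sub_distrib, ← Finset.mul_sum, ← Finset.sum_mul, hu, hv]
      have y : ∑ a, ∑ b, ∑ c, (u b * v c - u c * v b) * (u c * v a - u a * v c) = 0 := by
        rw [Finset.sum_comm]
        refine Finset.sum_eq_zero fun b _ => ?_
        rw [Finset.sum_comm]
        refine Finset.sum_eq_zero fun c _ => ?_
        rw [← Finset.mul_sum, z1, mul_zero]
      have w : ∑ a, ∑ c, (u c * v a - u a * v c) ^ 2 =
          ∑ a, ∑ c, (u a * v c - u c * v a) ^ 2 := by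
        refine Finset.sum_congr rfl fun a _ => Finset.sum_congr rfl fun c _ => ?_
        ring
      simp only [x, Finset.sum_add_distrib, ← Finset.mul_sum, z1, z2, y, w, mul_zero,
        Finset.sum_const, Finset.sum_const_zero, Finset.card_univ, Fintype.card_fin,
        nsmul_eq_mul]
      push_cast
      ring
    rw [e] at h
    exact mul_left_cancel₀ three_ne_zero h

end
end

section
/- Let N ≥ 1, t ∈ ℂ with t ≠ 0, and let λ ∈ ℂ satisfy λ² = 4(N+1)² t. For x ∈ ℂ^{N+1} with sin(x_i − x_j) ≠ 0 for all i ≠ j, define (N+1)×(N+1) matrices F_1(x),…,F_{N+1}(x) with entries (F_i(x))_{pq} = 2 + 2t Σ_{α∈A_N⁺} (α_i α_p + α_i α_q + α_p α_q) + λ t Σ_{α∈A_N⁺} α_i α_p α_q cot α(x), where α_i = α(e_i). Then for all i, j, k ∈ {1,…,N+1} and every such x at which F_j(x) is invertible, one has F_i(x) F_j(x)^{-1} F_k(x) = F_k(x) F_j(x)^{-1} F_i(x). -/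
open Finset

noncomputable section

/-- The matrix `F_i(x)` of third derivatives of the `A_N` prepotential with
`y = Σ xᵢ`:  `(F_i)_{pq} = 2 + 2t Σ_{α}(αᵢαₚ + αᵢα_q + αₚα_q) + λt Σ_α αᵢαₚα_q cot α(x)`. -/
def FmatA (N : ℕ) (t lam : ℂ) (i : Fin (N + 1)) (x : Fin (N + 1) → ℂ) :
    Matrix (Fin (N + 1)) (Fin (N + 1)) ℂ :=
  Matrix.of fun p q =>
    2 + 2 * t * (∑ pr ∈ Finset.univ.filter
        (fun pr : Fin (N + 1) × Fin (N + 1) => pr.1 < pr.2),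
      (aroot N pr i * aroot N pr p + aroot N pr i * aroot N pr q +
        aroot N pr p * aroot N pr q)) +
    lam * t * ∑ pr ∈ Finset.univ.filter
        (fun pr : Fin (N + 1) × Fin (N + 1) => pr.1 < pr.2),
      aroot N pr i * aroot N pr p * aroot N pr q * ccot (x pr.1 - x pr.2)

def dl {n : ℕ} (a b : Fin n) : ℂ := if a = b then 1 else 0

def TT {n : ℕ} (C : Fin n → Fin n → ℂ) (i p q : Fin n) : ℂ :=
  dl i p * dl i q * (∑ r, C i r) + dl p q * C i p - dl i p * C i q - dl i q * C i p

lemma dl_comm {n : ℕ} (a b : Fin n) : dl a b = dl b a := by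
  simp [dl, eq_comm]

lemma sum_dl_mul {n : ℕ} (a : Fin n) (f : Fin n → ℂ) : ∑ r, dl a r * f r = f a := by
  simp [dl]

lemma sum_dl_mul' {n : ℕ} (a : Fin n) (f : Fin n → ℂ) : ∑ r, dl r a * f r = f a := by
  simp [dl]

lemma sum_dl {n : ℕ} (a : Fin n) : ∑ r, dl a r = 1 := by
  simp [dl]

lemma sum_dl' {n : ℕ} (a : Fin n) : ∑ r, dl r a = 1 := by
  simp [dl]

lemma sum_half {n : ℕ} (g : Fin n × Fin n → ℂ) (hs : ∀ a b, g (a, b) = g (b, a))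
    (h0 : ∀ a, g (a, a) = 0) :
    2 * ∑ pr ∈ Finset.univ.filter (fun pr : Fin n × Fin n => pr.1 < pr.2), g pr
      = ∑ a, ∑ b, g (a, b) := by
  have h1 : ∑ pr ∈ Finset.univ.filter (fun pr : Fin n × Fin n => pr.1 < pr.2), g pr
      = ∑ a, ∑ b, if a < b then g (a, b) else 0 := by
    rw [Finset.sum_filter, Fintype.sum_prod_type]
  have h2 : ∑ a : Fin n, ∑ b : Fin n, (if a < b then g (a, b) else 0)
      = ∑ a : Fin n, ∑ b : Fin n, (if b < a then g (a, b) else 0) := by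
    rw [Finset.sum_comm]
    refine Finset.sum_congr rfl fun a _ => Finset.sum_congr rfl fun b _ => ?_
    rw [hs]
  rw [h1, two_mul]
  nth_rewrite 2 [h2]
  rw [← Finset.sum_add_distrib]
  refine Finset.sum_congr rfl fun a _ => ?_
  rw [← Finset.sum_add_distrib]
  refine Finset.sum_congr rfl fun b _ => ?_
  rcases lt_trichotomy a b with h | h | h
  · simp [h, h.le, not_lt.mpr h.le]
  · subst h; simp [h0]
  · simp [h, not_lt.mpr h.le]

lemma aroot_dl (N : ℕ) (a b i : Fin (N + 1)) : aroot N (a, b) i = dl a i - dl b i := by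
  simp [aroot, esgl, dl, Pi.single_apply, eq_comm]

lemma sum_two (N : ℕ) (i p : Fin (N + 1)) :
    ∑ pr ∈ Finset.univ.filter (fun pr : Fin (N + 1) × Fin (N + 1) => pr.1 < pr.2),
      aroot N pr i * aroot N pr p = ((N : ℂ) + 1) * dl i p - 1 := by
  have h := sum_half (fun pr : Fin (N + 1) × Fin (N + 1) => aroot N pr i * aroot N pr p)
    (by intro a b; simp only [aroot_dl]; ring) (by intro a; simp only [aroot_dl]; ring)
  apply mul_left_cancel₀ (two_ne_zero : (2 : ℂ) ≠ 0)
  rw [h]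
  have : ∀ a b : Fin (N + 1), aroot N (a, b) i * aroot N (a, b) p
      = dl a i * dl a p - dl a i * dl b p - dl b i * dl a p + dl b i * dl b p := by
    intro a b; simp only [aroot_dl]; ring
  simp only [this, Finset.sum_add_distrib, Finset.sum_sub_distrib, ← Finset.mul_sum,
    ← Finset.sum_mul, sum_dl', sum_dl_mul', Finset.sum_const, Finset.card_univ, Fintype.card_fin,
    nsmul_eq_mul]
  push_cast
  ring

lemma sum_three (N : ℕ) (C : Fin (N + 1) → Fin (N + 1) → ℂ) (hC : ∀ a b, C a b = - C b a)
    (i p q : Fin (N + 1)) :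
    ∑ pr ∈ Finset.univ.filter (fun pr : Fin (N + 1) × Fin (N + 1) => pr.1 < pr.2),
      aroot N pr i * aroot N pr p * aroot N pr q * C pr.1 pr.2 = TT C i p q := by
  have h := sum_half (fun pr : Fin (N + 1) × Fin (N + 1) =>
      aroot N pr i * aroot N pr p * aroot N pr q * C pr.1 pr.2)
    (by intro a b; simp only [aroot_dl]; rw [hC a b]; ring)
    (by intro a; simp only [aroot_dl]; ring)
  apply mul_left_cancel₀ (two_ne_zero : (2 : ℂ) ≠ 0)
  rw [h]
  have hexp : ∀ a b : Fin (N + 1), aroot N (a, b) i * aroot N (a, b) p * aroot N (a, b) q * C a b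
      = (dl a i * (dl a p * (dl a q * C a b)) - dl a i * (dl a p * (dl b q * C a b))
        - dl a i * (dl b p * (dl a q * C a b)) + dl a i * (dl b p * (dl b q * C a b)))
       - (dl b i * (dl a p * (dl a q * C a b)) - dl b i * (dl a p * (dl b q * C a b))
        - dl b i * (dl b p * (dl a q * C a b)) + dl b i * (dl b p * (dl b q * C a b))) := by
    intro a b; simp only [aroot_dl]; ring
  have hsw : ∑ a, C a i = - ∑ a, C i a := by
    rw [← Finset.sum_neg_distrib]; exact Finset.sum_congr rfl fun a _ => hC a i
  simp only [hexp, Finset.sum_add_distrib, Finset.sum_sub_distrib, ← Finset.mul_sum,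
    sum_dl_mul']
  have hz : ∀ a, C a a = 0 := fun a => self_eq_neg.mp (hC a a)
  unfold TT
  have e1 := hC p i
  have e2 := hC q i
  have e3 := hC q p
  by_cases h1 : i = p
  · subst h1
    by_cases h2 : i = q
    · subst h2; simp [dl, hz, hsw]; try ring
    · simp [dl, hz, h2, Ne.symm h2]; linear_combination e2
  · by_cases h2 : i = q
    · subst h2; simp [dl, hz, h1, Ne.symm h1]; linear_combination e1
    · by_cases h3 : p = q
      · subst h3; simp [dl, hz, h1, Ne.symm h1]; linear_combination -e1
      · simp [dl, h1, h2, h3, Ne.symm h1, Ne.symm h2, Ne.symm h3]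

lemma F_entry (N : ℕ) (t lam : ℂ) (x : Fin (N + 1) → ℂ) (i p q : Fin (N + 1)) :
    FmatA N t lam i x p q = (2 - 6 * t) + 2 * t * ((N : ℂ) + 1) * (dl i p + dl i q + dl p q)
      + lam * t * TT (fun a b => ccot (x a - x b)) i p q := by
  have h3 := sum_three N (fun a b => ccot (x a - x b))
    (by intro a b; simp only [ccot]; rw [← neg_sub, Complex.cos_neg, Complex.sin_neg, div_neg])
    i p q
  simp only [FmatA, Matrix.of_apply, Finset.sum_add_distrib, sum_two]
  rw [h3]
  ring

lemma TT_sum {n : ℕ} (C : Fin n → Fin n → ℂ) (i p : Fin n) : ∑ r, TT C i p r = 0 := by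
  have : ∀ r, TT C i p r = dl i r * (dl i p * ∑ r, C i r) + dl p r * C i p - dl i p * C i r
      - dl i r * C i p := by intro r; unfold TT; ring
  simp only [this, Finset.sum_add_distrib, Finset.sum_sub_distrib, ← Finset.mul_sum,
    ← Finset.sum_mul, sum_dl]
  ring

lemma TT_symm {n : ℕ} (C : Fin n → Fin n → ℂ) (i p q : Fin n) : TT C i p q = TT C i q p := by
  unfold TT
  rw [dl_comm q p]
  by_cases h : p = q
  · subst h; ring
  · simp only [dl, if_neg h]; ring

lemma TT_symm' {n : ℕ} (C : Fin n → Fin n → ℂ) (hC : ∀ a b, C a b = - C b a)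
    (i p q : Fin n) : TT C i p q = TT C p i q := by
  have hz : ∀ a, C a a = 0 := fun a => self_eq_neg.mp (hC a a)
  unfold TT
  have e1 := hC p i
  have e2 := hC q i
  have e3 := hC q p
  by_cases h1 : i = p
  · subst h1; rfl
  · by_cases h2 : i = q
    · subst h2; simp [dl, hz, h1, Ne.symm h1]; linear_combination -e1 
    · by_cases h3 : p = q
      · subst h3; simp [dl, hz, h1, Ne.symm h1]; linear_combination e1
      · simp [dl, h1, h2, h3, Ne.symm h1, Ne.symm h2, Ne.symm h3]

lemma TT_sum' {n : ℕ} (C : Fin n → Fin n → ℂ) (i p : Fin n) : ∑ r, TT C i r p = 0 := by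
  rw [← TT_sum C i p]; exact Finset.sum_congr rfl fun r _ => TT_symm C i r p

lemma TT_mul {n : ℕ} (C : Fin n → Fin n → ℂ) (i k p q : Fin n) :
    ∑ r, TT C i p r * TT C k r q =
      dl i p * dl k q * (∑ r, C i r * C k r)
      + dl i p * (∑ r, C i r) * TT C k i q + C i p * TT C k p q - C i p * TT C k i q
      - dl i p * (C i k * (dl k q * (∑ r, C k r) - C k q) + C i q * C k q) := by
  have h : ∀ r, TT C i p r * TT C k r q =
      dl i r * (dl i p * (∑ r, C i r) * TT C k r q) + dl p r * (C i p * TT C k r q)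
      - dl i r * (C i p * TT C k r q)
      - dl k r * (dl i p * (C i r * (dl k q * (∑ r, C k r) - C k q)))
      - dl r q * (dl i p * (C i r * C k r))
      + dl i p * dl k q * (C i r * C k r) := by
    intro r
    have : dl r q * C k r = dl r q * C k r := rfl
    conv_lhs => rw [TT]
    simp only [TT]; ring
  simp only [h, Finset.sum_add_distrib, Finset.sum_sub_distrib, ← Finset.mul_sum, sum_dl_mul,
    sum_dl_mul']
  ring

lemma TT_comm {n : ℕ} (C : Fin n → Fin n → ℂ) (hC : ∀ a b, C a b = - C b a)
    (hcot : ∀ a b c, a ≠ b → b ≠ c → c ≠ a → C a b * C b c + C b c * C c a + C c a * C a b = 1)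
    (i k p q : Fin n) (hik : i ≠ k) :
    ∑ r, TT C i p r * TT C k r q - ∑ r, TT C k p r * TT C i r q =
      (dl i p - dl k p - dl i q + dl k q) - n * (dl i p * dl k q - dl k p * dl i q) := by
  have hz : ∀ a, C a a = 0 := fun a => self_eq_neg.mp (hC a a)
  have hki := hC k i
  have hb : ∀ r, C i r * C k r = C i k * C k r - C i k * C i r - 1
      + (dl i r + dl k r) * (1 + C i k ^ 2) := by
    intro r
    by_cases h1 : i = r
    · subst h1; simp [dl, hz, hik.symm, hki]; ring
    by_cases h2 : k = r
    · subst h2; simp [dl, hz, hik]; ring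
    have := hcot i k r hik h2 (Ne.symm h1)
    rw [hC r i] at this
    simp [dl, h1, h2]
    linear_combination -this
  have hs : ∑ r, C i r * C k r = C i k * (∑ r, C k r) - C i k * (∑ r, C i r) - n
      + 2 * (1 + C i k ^ 2) := by
    rw [Finset.sum_congr rfl fun r _ => hb r]
    simp only [Finset.sum_add_distrib, Finset.sum_sub_distrib, ← Finset.mul_sum,
      ← Finset.sum_mul, sum_dl, Finset.sum_const, Finset.card_univ, Fintype.card_fin,
      nsmul_eq_mul]
    ring
  have hs' : ∑ r, C k r * C i r = ∑ r, C i r * C k r :=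
    Finset.sum_congr rfl fun r _ => mul_comm _ _
  rw [TT_mul, TT_mul, hs', hs]
  have bp := hb p
  have bq := hb q
  simp only [TT]
  generalize (∑ r, C i r) = Si at *
  generalize (∑ r, C k r) = Sk at *
  clear hs hs' hb hcot
  by_cases a1 : i = p
  · subst a1
    by_cases a2 : i = q
    · subst a2
      simp [dl, hz, hik, hik.symm, hki] at *; try ring
    · by_cases a3 : k = q
      · subst a3
        simp [dl, hz, hik, hik.symm, hki] at *; try ring
      · simp [dl, hz, hik, hik.symm, hki, a2, a3] at *
        linear_combination -bq
  · by_cases b1 : k = p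
    · subst b1
      by_cases a2 : i = q
      · subst a2
        simp [dl, hz, hik, hik.symm, hki] at *; try ring
      · by_cases a3 : k = q
        · subst a3
          simp [dl, hz, hik, hik.symm, hki] at *; try ring
        · simp [dl, hz, hik, hik.symm, hki, a2, a3] at *
          linear_combination bq
    · by_cases a2 : i = q
      · subst a2
        simp [dl, hz, hik, hik.symm, hki, a1, b1, Ne.symm a1, Ne.symm b1] at *
        linear_combination bp
      · by_cases a3 : k = q
        · subst a3
          simp [dl, hz, hik, hik.symm, hki, a1, b1, Ne.symm a1, Ne.symm b1] at *
          linear_combination -bp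
        · simp [dl, hz, hik, hik.symm, hki, a1, b1, a2, a3, Ne.symm a1, Ne.symm b1] at *
          try ring

lemma ccot_id (a b c : ℂ) (h : a + b + c = 0) (ha : Complex.sin a ≠ 0) (hb : Complex.sin b ≠ 0)
    (hc : Complex.sin c ≠ 0) : ccot a * ccot b + ccot b * ccot c + ccot c * ccot a = 1 := by
  obtain rfl : c = -(a + b) := by linear_combination h
  rw [Complex.sin_neg, neg_ne_zero] at hc
  simp only [ccot, Complex.sin_neg, Complex.cos_neg]
  field_simp
  rw [Complex.sin_add, Complex.cos_add]
  ring

lemma F_sum (N : ℕ) (t lam : ℂ) (x : Fin (N + 1) → ℂ) (i p : Fin (N + 1)) :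
    ∑ r, FmatA N t lam i x p r =
      2 * ((N : ℂ) + 1) * (1 - t) + 2 * t * ((N : ℂ) + 1) ^ 2 * dl i p := by
  simp only [F_entry, Finset.sum_add_distrib, ← Finset.mul_sum, TT_sum, sum_dl,
    Finset.sum_const, Finset.card_univ, Fintype.card_fin, nsmul_eq_mul]
  push_cast
  ring

lemma F_symm (N : ℕ) (t lam : ℂ) (x : Fin (N + 1) → ℂ) (i p q : Fin (N + 1)) :
    FmatA N t lam i x p q = FmatA N t lam i x q p := by
  rw [F_entry, F_entry, TT_symm, dl_comm p q]; ring

lemma F_mul (N : ℕ) (t lam : ℂ) (x : Fin (N + 1) → ℂ) (i k p q : Fin (N + 1)) (u v w : ℂ)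
    (C : Fin (N + 1) → Fin (N + 1) → ℂ) :
    ∑ r, (u + v * (dl i p + dl i r + dl p r) + w * TT C i p r) *
        (u + v * (dl k r + dl k q + dl r q) + w * TT C k r q) =
      (u + v * dl i p) * (u + v * dl k q) * (N + 1)
      + (u + v * dl i p) * v * 2 + (u + v * dl k q) * v * 2
      + v ^ 2 * (dl k i + dl i q + dl k p + dl p q)
      + v * w * (TT C k i q + TT C k p q + TT C i p k + TT C i p q)
      + w ^ 2 * ∑ r, TT C i p r * TT C k r q := by
  have h : ∀ r, (u + v * (dl i p + dl i r + dl p r) + w * TT C i p r) *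
        (u + v * (dl k r + dl k q + dl r q) + w * TT C k r q) =
      (u + v * dl i p) * (u + v * dl k q)
      + (u + v * dl i p) * v * dl k r + (u + v * dl i p) * v * dl r q
      + (u + v * dl k q) * v * dl i r + (u + v * dl k q) * v * dl p r
      + v ^ 2 * (dl i r * dl k r) + v ^ 2 * (dl i r * dl r q)
      + v ^ 2 * (dl p r * dl k r) + v ^ 2 * (dl p r * dl r q)
      + v * w * (dl i r * TT C k r q) + v * w * (dl p r * TT C k r q)
      + v * w * (dl k r * TT C i p r) + v * w * (dl r q * TT C i p r)
      + (u + v * dl i p) * w * TT C k r q + (u + v * dl k q) * w * TT C i p r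
      + w ^ 2 * (TT C i p r * TT C k r q) := by
    intro r; ring
  simp only [h, Finset.sum_add_distrib, ← Finset.mul_sum, sum_dl_mul, sum_dl_mul', sum_dl, sum_dl',
    TT_sum, TT_sum', Finset.sum_const, Finset.card_univ, Fintype.card_fin, nsmul_eq_mul]
  push_cast
  ring

def Jm (n : ℕ) : Matrix (Fin n) (Fin n) ℂ := Matrix.of fun _ _ => 1

def Km (N : ℕ) (t : ℂ) : Matrix (Fin (N + 1)) (Fin (N + 1)) ℂ :=
  ((N : ℂ) + 1) • (1 : Matrix (Fin (N + 1)) (Fin (N + 1)) ℂ) - (1 - t) • Jm (N + 1)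

lemma Km_inv (N : ℕ) (t : ℂ) (ht : t ≠ 0) :
    ∃ B : Matrix (Fin (N + 1)) (Fin (N + 1)) ℂ, B * Km N t = 1 := by
  have hn : (N : ℂ) + 1 ≠ 0 := by exact_mod_cast Nat.succ_ne_zero N
  have hJ : Jm (N + 1) * Jm (N + 1) = ((N : ℂ) + 1) • Jm (N + 1) := by
    ext p q; simp [Jm, Matrix.mul_apply]
  refine ⟨(1 / (t * ((N : ℂ) + 1) ^ 2)) • ((1 - t) • Jm (N + 1) +
    (t * ((N : ℂ) + 1)) • (1 : Matrix (Fin (N + 1)) (Fin (N + 1)) ℂ)), ?_⟩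
  rw [Km, Matrix.smul_mul, mul_sub, add_mul, add_mul]
  simp only [Matrix.smul_mul, Matrix.mul_smul, hJ, Matrix.mul_one, Matrix.one_mul]
  ext p q
  simp only [Matrix.smul_apply, Matrix.sub_apply, Matrix.add_apply, smul_eq_mul]
  field_simp
  ring

lemma F_comm (N : ℕ) (t lam : ℂ)
    (hlam : lam ^ 2 = 4 * ((N : ℂ) + 1) ^ 2 * t)
    (x : Fin (N + 1) → ℂ)
    (hx : ∀ i j : Fin (N + 1), i ≠ j → Complex.sin (x i - x j) ≠ 0)
    (i k : Fin (N + 1)) :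
    FmatA N t lam i x * Km N t * FmatA N t lam k x =
      FmatA N t lam k x * Km N t * FmatA N t lam i x := by
  by_cases hik : i = k
  · rw [hik]
  have hC : ∀ a b : Fin (N + 1), ccot (x a - x b) = - ccot (x b - x a) := by
    intro a b; simp only [ccot]; rw [← neg_sub, Complex.cos_neg, Complex.sin_neg, div_neg]
  have key : ∀ i k p q : Fin (N + 1), (FmatA N t lam i x * Km N t * FmatA N t lam k x) p q =
      ((N : ℂ) + 1) * (∑ r, FmatA N t lam i x p r * FmatA N t lam k x r q)
      - (1 - t) * ((2 * ((N : ℂ) + 1) * (1 - t) + 2 * t * ((N : ℂ) + 1) ^ 2 * dl i p) *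
        (2 * ((N : ℂ) + 1) * (1 - t) + 2 * t * ((N : ℂ) + 1) ^ 2 * dl k q)) := by
    intro i k p q
    have hJ : (FmatA N t lam i x * Jm (N + 1) * FmatA N t lam k x) p q =
        (∑ r, FmatA N t lam i x p r) * (∑ r, FmatA N t lam k x q r) := by
      rw [Matrix.mul_apply, Finset.mul_sum]
      refine Finset.sum_congr rfl fun r _ => ?_
      rw [Matrix.mul_apply, F_symm N t lam x k r q]
      simp [Jm]
    rw [F_sum, F_sum] at hJ
    rw [Km, mul_sub, sub_mul]
    simp only [Matrix.smul_mul, Matrix.mul_smul, Matrix.mul_one, Matrix.sub_apply,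
      Matrix.smul_apply, smul_eq_mul, hJ, Matrix.mul_apply]
  ext p q
  rw [key, key]
  simp only [F_entry]
  rw [F_mul N t lam x, F_mul N t lam x]
  have hT := TT_comm (fun a b => ccot (x a - x b)) hC (by
    intro a b c hab hbc hca
    exact ccot_id _ _ _ (by ring) (hx _ _ hab) (hx _ _ hbc) (hx _ _ hca)) i k p q hik
  have s1 := TT_symm' _ hC k i q
  have s2 : TT (fun a b => ccot (x a - x b)) i p k = TT (fun a b => ccot (x a - x b)) k p i := by
    rw [TT_symm _ i p k, TT_symm' _ hC i k p, TT_symm _ k i p]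
  have s3 := dl_comm k i
  push_cast at hT
  linear_combination ((N : ℂ) + 1) * (2 * t * ((N : ℂ) + 1) * (lam * t)) * (s1 + s2)
    + ((N : ℂ) + 1) * (lam * t) ^ 2 * hT
    + ((N : ℂ) + 1) * (2 * t * ((N : ℂ) + 1)) ^ 2 * s3
    + ((N : ℂ) + 1) * t ^ 2 * ((dl i p - dl k p - dl i q + dl k q)
      - ((N : ℂ) + 1) * (dl i p * dl k q - dl k p * dl i q)) * hlam

theorem AN_satisfies_WDVV (N : ℕ) (hN : 1 ≤ N) (t lam : ℂ) (ht : t ≠ 0)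
    (hlam : lam ^ 2 = 4 * ((N : ℂ) + 1) ^ 2 * t)
    (x : Fin (N + 1) → ℂ)
    (hx : ∀ i j : Fin (N + 1), i ≠ j → Complex.sin (x i - x j) ≠ 0)
    (i j k : Fin (N + 1)) (hj : IsUnit (FmatA N t lam j x)) :
    FmatA N t lam i x * (FmatA N t lam j x)⁻¹ * FmatA N t lam k x =
      FmatA N t lam k x * (FmatA N t lam j x)⁻¹ * FmatA N t lam i x := by
  obtain ⟨B, hB⟩ := Km_inv N t ht
  have hc := F_comm N t lam hlam x hx
  have hd := (Matrix.isUnit_iff_isUnit_det _).mp hj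
  have g1 := Matrix.nonsing_inv_mul _ hd
  have g2 := Matrix.mul_nonsing_inv _ hd
  generalize (FmatA N t lam j x)⁻¹ = G at *
  have hG : ∀ l, G * FmatA N t lam l x * Km N t = Km N t * FmatA N t lam l x * G := by
    intro l
    calc G * FmatA N t lam l x * Km N t
        = G * (FmatA N t lam l x * Km N t * FmatA N t lam j x) * G := by
          simp only [Matrix.mul_assoc, g2, Matrix.mul_one]
      _ = G * (FmatA N t lam j x * Km N t * FmatA N t lam l x) * G := by rw [hc]
      _ = (G * FmatA N t lam j x) * Km N t * FmatA N t lam l x * G := by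
          simp only [Matrix.mul_assoc]
      _ = _ := by rw [g1, Matrix.one_mul]
  have hh : ∀ a b, FmatA N t lam a x * G * FmatA N t lam b x
      = B * G * (FmatA N t lam a x * Km N t * FmatA N t lam b x) := by
    intro a b
    calc FmatA N t lam a x * G * FmatA N t lam b x
        = (B * Km N t) * FmatA N t lam a x * G * FmatA N t lam b x := by
          rw [hB, Matrix.one_mul]
      _ = B * (Km N t * FmatA N t lam a x * G) * FmatA N t lam b x := by
          simp only [Matrix.mul_assoc]
      _ = B * (G * FmatA N t lam a x * Km N t) * FmatA N t lam b x := by rw [hG]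
      _ = _ := by simp only [Matrix.mul_assoc]
  rw [hh, hh, hc]

end
end

section
/- Let r, s ∈ ℂ with 4r + s ≠ 0, set p = 2r + s and q = s(s − 2r)/(4r + s), and assume p·s ≠ 0. Let 𝒜 ⊂ (ℂ⁴)* consist of the covectors e^1, e^2, e^3 each with multiplicity p, e^4 with multiplicity q, e^i ± e^j (1 ≤ i < j ≤ 3) each with multiplicity r, and (1/2)(e^1 ± e^2 ± e^3 ± e^4) (all eight sign choices) each with multiplicity s. Then (𝒜,c) is a trigonometric ∨-system, and for any λ ∈ ℂ with λ² = 108(2r+s)²/(4r+s), the triple (𝒜,c,λ) satisfies the trigonometric WDVV equations. -/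
open scoped Classical
open Finset

noncomputable section

/-- The standard covector `e^i` of `(ℂ^4)^*`. -/
def esgl4 (i : Fin 4) : Fin 4 → ℂ := Pi.single i 1

/-- A sign `±1` attached to a boolean. -/
def sgn (b : Bool) : ℂ := if b then 1 else -1

/-- The covector `(1/2)(e^1 ± e^2 ± e^3 ± e^4)` attached to a triple of signs. -/
def halfvec (b : Bool × Bool × Bool) : Fin 4 → ℂ :=
  (1 / 2 : ℂ) • (esgl4 0 + sgn b.1 • esgl4 1 + sgn b.2.1 • esgl4 2 + sgn b.2.2 • esgl4 3)

/-- The configuration of Proposition `4-dim trig. sys.`: the covectors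
`e^1, e^2, e^3, e^4`, `e^i ± e^j` (`1 ≤ i < j ≤ 3`) and `(1/2)(e^1 ± e^2 ± e^3 ± e^4)`. -/
def A4dim : Finset (Fin 4 → ℂ) :=
  ({esgl4 0, esgl4 1, esgl4 2, esgl4 3} : Finset (Fin 4 → ℂ)) ∪
  ((Finset.univ.filter (fun p : Fin 4 × Fin 4 => p.1 < p.2 ∧ p.2 ≠ 3)).image
    (fun p => esgl4 p.1 + esgl4 p.2)) ∪
  ((Finset.univ.filter (fun p : Fin 4 × Fin 4 => p.1 < p.2 ∧ p.2 ≠ 3)).image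
    (fun p => esgl4 p.1 - esgl4 p.2)) ∪
  ((Finset.univ : Finset (Bool × Bool × Bool)).image halfvec)

/-- The coordinate `i` of twice the `k`-th covector (digits are stored shifted by 2, base 8). -/
def M4 (k : Fin 18) (i : Fin 4) : ℤ :=
  Int.subNatNat (15102475618961148591254953461099817272309453656743298821809382548 / 8 ^ (4 * k.val + i.val) % 8) 2

/-- The type of the `k`-th covector: multiplicity `p`, `q`, `r` or `s`. -/
def ty4 : Fin 18 → Fin 4 := ![0, 0, 0, 1, 2, 2, 2, 2, 2, 2, 3, 3, 3, 3, 3, 3, 3, 3]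

def vec4 (k : Fin 18) : Fin 4 → ℂ := fun i => (M4 k i : ℂ) / 2

def hidx (b : Bool × Bool × Bool) : Fin 18 :=
  match b with
  | (true, true, true) => 10
  | (true, true, false) => 11
  | (true, false, true) => 12
  | (true, false, false) => 13
  | (false, true, true) => 14
  | (false, true, false) => 15
  | (false, false, true) => 16
  | (false, false, false) => 17

def xx (a b : Fin 18) : ℤ := M4 a 0 * M4 b 0 + M4 a 1 * M4 b 1 + M4 a 2 * M4 b 2
def yy (a b : Fin 18) : ℤ := M4 a 3 * M4 b 3

/-- Coefficients of `r` and `s` in `12 p c_b a(b^∨)`. -/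
def LZ (a b : Fin 18) : Fin 2 → ℤ :=
  (![![2 * xx a b, xx a b], ![-2 * yy a b, yy a b], ![xx a b, 0],
    ![4 * yy a b, xx a b + yy a b]] : Fin 4 → Fin 2 → ℤ) (ty4 b)

/-- Coefficients of `r^2`, `r s`, `s^2` in `12 p c_a c_b a(b^∨)`, for `a ≠ b`. -/
def KZ (a b : Fin 18) : Fin 3 → ℤ :=
  (![![2 * LZ a b 0, LZ a b 0 + 2 * LZ a b 1, LZ a b 1], ![0, -2 * yy a b, yy a b],
    ![LZ a b 0, LZ a b 1, 0], ![0, LZ a b 0, LZ a b 1]] : Fin 4 → Fin 3 → ℤ) (ty4 a)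

def tri (a b c : Fin 18) : Prop :=
  M4 a 0 + M4 b 0 = M4 c 0 ∧ M4 a 1 + M4 b 1 = M4 c 1 ∧ M4 a 2 + M4 b 2 = M4 c 2 ∧
    M4 a 3 + M4 b 3 = M4 c 3

instance (a b c : Fin 18) : Decidable (tri a b c) := by unfold tri; infer_instance

def wz (a b : Fin 18) (i j : Fin 4) : ℤ := M4 a i * M4 b j - M4 a j * M4 b i

/-- The summand expressing `KZ x y` through triples. -/
def kt (m : Fin 3) (a b c : Fin 18) : ℤ := if ty4 a = 0 then KZ b c m else KZ a c m

def gz (m : Fin 3) (x y z : Fin 18) : ℤ :=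
  (if tri x y z then - kt m x y z else 0) + (if tri x z y then kt m x z y else 0) +
    (if tri z y x then kt m z y x else 0)

theorem KZ_eq : ∀ m x y, x ≠ y → KZ x y m = ∑ z, gz m x y z := by
  decide +kernel

/-- Index of a nonzero coordinate of the `a`-th covector. -/
def piv4 : Fin 18 → Fin 4 := ![0, 1, 2, 3, 0, 0, 1, 0, 0, 1, 0, 0, 0, 0, 0, 0, 0, 0]

/-- Divisibility of the integer vector with entries `s0, s1, s2, s3` (with `sp` the entry at the
pivot of `a`) by the `a`-th covector. -/
def dvZ (a : Fin 18) (v s0 s1 s2 s3 sp : ℤ) : Prop :=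
  s0 * v = sp * M4 a 0 ∧ s1 * v = sp * M4 a 1 ∧ s2 * v = sp * M4 a 2 ∧ s3 * v = sp * M4 a 3 ∧
    sp % v = 0

instance (a : Fin 18) (v s0 s1 s2 s3 sp : ℤ) : Decidable (dvZ a v s0 s1 s2 s3 sp) := by
  unfold dvZ; infer_instance

/-- The `α`-series relation between `g` and `b`, decidable form. -/
def relZ (a g b : Fin 18) : Prop :=
  dvZ a (M4 a (piv4 a)) (M4 g 0 + M4 b 0) (M4 g 1 + M4 b 1) (M4 g 2 + M4 b 2) (M4 g 3 + M4 b 3)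
      (M4 g (piv4 a) + M4 b (piv4 a)) ∨
    dvZ a (M4 a (piv4 a)) (M4 g 0 - M4 b 0) (M4 g 1 - M4 b 1) (M4 g 2 - M4 b 2) (M4 g 3 - M4 b 3)
      (M4 g (piv4 a) - M4 b (piv4 a))

instance (a b c : Fin 18) : Decidable (relZ a b c) := by unfold relZ; infer_instance

/-- For each `α`, the list of equivalence classes. -/
def cls4 : Fin 18 → List (List (Fin 18)) :=
  ![[[0], [1, 4, 7], [2, 5, 8], [3], [6], [9], [10, 17], [11, 16], [12, 15], [13, 14]],
    [[0, 4, 7], [1], [2, 6, 9], [3], [5], [8], [10, 14], [11, 15], [12, 16], [13, 17]],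
    [[0, 5, 8], [1, 6, 9], [2], [3], [4], [7], [10, 12], [11, 13], [14, 16], [15, 17]],
    [[0], [1], [2], [3], [4], [5], [6], [7], [8], [9], [10, 11], [12, 13], [14, 15], [16, 17]],
    [[0, 1], [2], [3], [4], [5, 9], [6, 8], [7], [10, 13], [11, 12], [14], [15], [16], [17]],
    [[0, 2], [1], [3], [4, 9], [5], [6, 7], [8], [10, 15], [11, 14], [12], [13], [16], [17]],
    [[0], [1, 2], [3], [4, 8], [5, 7], [6], [9], [10, 16], [11, 17], [12], [13], [14], [15]],
    [[0, 1], [2], [3], [4], [5, 6], [7], [8, 9], [10], [11], [12], [13], [14, 17], [15, 16]],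
    [[0, 2], [1], [3], [4, 6], [5], [7, 9], [8], [10], [11], [12, 17], [13, 16], [14], [15]],
    [[0], [1, 2], [3], [4, 5], [6], [7, 8], [9], [10], [11], [12, 14], [13, 15], [16], [17]],
    [[0, 17], [1, 14], [2, 12], [3, 11], [4, 13], [5, 15], [6, 16], [7], [8], [9], [10]],
    [[0, 16], [1, 15], [2, 13], [3, 10], [4, 12], [5, 14], [6, 17], [7], [8], [9], [11]],
    [[0, 15], [1, 16], [2, 10], [3, 13], [4, 11], [5], [6], [7], [8, 17], [9, 14], [12]],
    [[0, 14], [1, 17], [2, 11], [3, 12], [4, 10], [5], [6], [7], [8, 16], [9, 15], [13]],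
    [[0, 13], [1, 10], [2, 16], [3, 15], [4], [5, 11], [6], [7, 17], [8], [9, 12], [14]],
    [[0, 12], [1, 11], [2, 17], [3, 14], [4], [5, 10], [6], [7, 16], [8], [9, 13], [15]],
    [[0, 11], [1, 12], [2, 14], [3, 17], [4], [5], [6, 10], [7, 15], [8, 13], [9], [16]],
    [[0, 10], [1, 13], [2, 15], [3, 16], [4], [5], [6, 11], [7, 14], [8, 12], [9], [17]]]

theorem cls4_spec : ∀ a g, ∃ l ∈ cls4 a, g ∈ l ∧ ∀ b, relZ a g b ↔ b ∈ l := by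
  decide +kernel

theorem cls4_nodup : ∀ a, ∀ l ∈ cls4 a, l.Nodup := by
  decide +kernel

theorem vsys_Z : ∀ a, ∀ l ∈ cls4 a, ∀ i j : Fin 4, ∀ m : Fin 2,
    (l.map fun b => LZ a b m * wz a b i j).sum = 0 := by
  decide +kernel

def T4 : List (Fin 18 × Fin 18 × Fin 18) := 
  [(0, 1, 4), (0, 2, 5), (1, 0, 4), (1, 2, 6), (1, 7, 0), (1, 14, 10), (1, 15, 11), (1, 16, 12),
    (1, 17, 13), (2, 0, 5), (2, 1, 6), (2, 8, 0), (2, 9, 1), (2, 12, 10), (2, 13, 11), (2, 16,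
    14), (2, 17, 15), (3, 11, 10), (3, 13, 12), (3, 15, 14), (3, 17, 16), (5, 9, 4), (6, 7, 5),
    (6, 8, 4), (6, 16, 10), (6, 17, 11), (7, 1, 0), (7, 6, 5), (7, 9, 8), (8, 2, 0), (8, 6, 4),
    (9, 2, 1), (9, 5, 4), (9, 7, 8), (9, 14, 12), (9, 15, 13), (10, 13, 4), (10, 15, 5), (10,
    17, 0), (11, 3, 10), (11, 12, 4), (11, 14, 5), (11, 16, 0), (12, 2, 10), (12, 11, 4), (12,
    15, 0), (12, 17, 8), (13, 2, 11), (13, 3, 12), (13, 10, 4), (13, 14, 0), (13, 16, 8), (14,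
    1, 10), (14, 9, 12), (14, 11, 5), (14, 13, 0), (14, 17, 7), (15, 1, 11), (15, 3, 14), (15,
    9, 13), (15, 10, 5), (15, 12, 0), (15, 16, 7), (16, 1, 12), (16, 2, 14), (16, 6, 10), (16,
    11, 0), (16, 13, 8), (16, 15, 7), (17, 1, 13), (17, 2, 15), (17, 3, 16), (17, 6, 11), (17,
    10, 0), (17, 12, 8), (17, 14, 7)]

theorem T4_eq : (Finset.univ.filter fun x : Fin 18 × Fin 18 × Fin 18 => tri x.1 x.2.1 x.2.2) =
    T4.toFinset := by
  decide +kernel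

theorem T4_nodup : T4.Nodup := by decide +kernel

/-- The constants. -/
def cz (m : Fin 3) (i j p q : Fin 4) : ℤ :=
  ((if i = p ∧ j = q then 1 else 0) - (if j = p ∧ i = q then 1 else 0)) *
    (if i = 3 ∨ j = 3 then ![0, 256, 128] m else ![1024, 768, 128] m)

theorem const_Z0 : ∀ i j p q : Fin 4, i < j → p < q → ∀ m,
    (T4.map fun x => kt m x.1 x.2.1 x.2.2 * wz x.1 x.2.1 i j * wz x.1 x.2.1 p q).sum =
      cz m i j p q := by
  decide +kernel

theorem wz_self (a b : Fin 18) (i : Fin 4) : wz a b i i = 0 := by unfold wz; ring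

theorem wz_swap (a b : Fin 18) (i j : Fin 4) : wz a b i j = - wz a b j i := by unfold wz; ring

theorem cz_self1 : ∀ m i p q, cz m i i p q = 0 := by decide +kernel
theorem cz_self2 : ∀ m i j p, cz m i j p p = 0 := by decide +kernel
theorem cz_swap1 : ∀ m i j p q, cz m i j p q = - cz m j i p q := by decide +kernel
theorem cz_swap2 : ∀ m i j p q, cz m i j p q = - cz m i j q p := by decide +kernel

theorem list_sum_map_neg {β : Type*} (l : List β) (f g : β → ℤ) (h : ∀ x, f x = - g x) :
    (l.map f).sum = - (l.map g).sum := by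
  induction l with
  | nil => simp
  | cons a l ih => simp [ih, h]; ring

theorem const_Z1 (i j p q : Fin 4) (hij : i < j) (m : Fin 3) :
    (T4.map fun x => kt m x.1 x.2.1 x.2.2 * wz x.1 x.2.1 i j * wz x.1 x.2.1 p q).sum =
      cz m i j p q := by
  rcases lt_trichotomy p q with h | h | h
  · exact const_Z0 i j p q hij h m
  · subst h; simp [wz_self, cz_self2]
  · rw [cz_swap2, ← const_Z0 i j q p hij h m]
    apply list_sum_map_neg
    intro x; rw [wz_swap _ _ p q]; ring

theorem const_Z (m : Fin 3) (i j p q : Fin 4) :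
    (T4.map fun x => kt m x.1 x.2.1 x.2.2 * wz x.1 x.2.1 i j * wz x.1 x.2.1 p q).sum =
      cz m i j p q := by
  rcases lt_trichotomy i j with h | h | h
  · exact const_Z1 i j p q h m
  · subst h; simp [wz_self, cz_self1]
  · rw [cz_swap1, ← const_Z1 j i p q h m]
    apply list_sum_map_neg
    intro x; rw [wz_swap _ _ i j]; ring

theorem M4_inj : ∀ a b, M4 a = M4 b → a = b := by
  have h : ∀ a b, (M4 a 0 = M4 b 0 ∧ M4 a 1 = M4 b 1 ∧ M4 a 2 = M4 b 2 ∧ M4 a 3 = M4 b 3) →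
    a = b := by decide +kernel
  intro a b hab
  exact h a b (by simp [hab])

theorem vec4_inj : Function.Injective vec4 := by
  intro a b hab
  apply M4_inj
  funext i
  have := congrFun hab i
  simp only [vec4] at this
  have h2 : (M4 a i : ℂ) = M4 b i := by linear_combination 2 * this
  exact_mod_cast h2

theorem M4_tab : M4 = ![![2, 0, 0, 0], ![0, 2, 0, 0], ![0, 0, 2, 0], ![0, 0, 0, 2], ![2, 2, 0, 0],
    ![2, 0, 2, 0], ![0, 2, 2, 0], ![2, -2, 0, 0], ![2, 0, -2, 0], ![0, 2, -2, 0], ![1, 1, 1, 1],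
    ![1, 1, 1, -1], ![1, 1, -1, 1], ![1, 1, -1, -1], ![1, -1, 1, 1], ![1, -1, 1, -1],
    ![1, -1, -1, 1], ![1, -1, -1, -1]] := by
  decide +kernel

theorem vec_e (i : Fin 4) : esgl4 i = vec4 (i.castLE (by norm_num)) := by
  ext j; fin_cases i <;> fin_cases j <;> simp [esgl4, vec4, M4_tab, Fin.castLE]

theorem vec_e0 : esgl4 0 = vec4 0 := vec_e 0
theorem vec_e1 : esgl4 1 = vec4 1 := vec_e 1
theorem vec_e2 : esgl4 2 = vec4 2 := vec_e 2
theorem vec_e3 : esgl4 3 = vec4 3 := vec_e 3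

theorem vec_p01 : esgl4 0 + esgl4 1 = vec4 4 := by
  ext j; fin_cases j <;> simp [esgl4, vec4, M4_tab]
theorem vec_p02 : esgl4 0 + esgl4 2 = vec4 5 := by
  ext j; fin_cases j <;> simp [esgl4, vec4, M4_tab]
theorem vec_p12 : esgl4 1 + esgl4 2 = vec4 6 := by
  ext j; fin_cases j <;> simp [esgl4, vec4, M4_tab]
theorem vec_m01 : esgl4 0 - esgl4 1 = vec4 7 := by
  ext j; fin_cases j <;> simp [esgl4, vec4, M4_tab]
theorem vec_m02 : esgl4 0 - esgl4 2 = vec4 8 := by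
  ext j; fin_cases j <;> simp [esgl4, vec4, M4_tab]
theorem vec_m12 : esgl4 1 - esgl4 2 = vec4 9 := by
  ext j; fin_cases j <;> simp [esgl4, vec4, M4_tab]

theorem vec_h (b : Bool × Bool × Bool) : halfvec b = vec4 (hidx b) := by
  obtain ⟨b1, b2, b3⟩ := b
  ext j
  cases b1 <;> cases b2 <;> cases b3 <;> fin_cases j <;>
    simp [esgl4, vec4, M4_tab, halfvec, hidx, sgn] <;> norm_num

theorem filt : (Finset.univ.filter (fun p : Fin 4 × Fin 4 => p.1 < p.2 ∧ p.2 ≠ 3)) =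
    {(0, 1), (0, 2), (1, 2)} := by
  ext ⟨a, b⟩
  fin_cases a <;> fin_cases b <;> simp

theorem A4_eq : A4dim = Finset.univ.image vec4 := by
  unfold A4dim
  rw [filt]
  have hu : (Finset.univ : Finset (Bool × Bool × Bool)).image halfvec =
      (({10, 11, 12, 13, 14, 15, 16, 17} : Finset (Fin 18))).image vec4 := by
    have : (fun b => halfvec b) = fun b => vec4 (hidx b) := funext vec_h
    have h2 : halfvec = vec4 ∘ hidx := this
    rw [h2, ← Finset.image_image]
    congr 1
  rw [hu]
  simp only [Finset.image_insert, Finset.image_singleton, vec_e0, vec_e1, vec_e2, vec_e3]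
  simp only [← vec_e0, ← vec_e1, ← vec_e2, vec_p01, vec_p02, vec_p12, vec_m01, vec_m02, vec_m12]
  simp only [vec_e0, vec_e1, vec_e2]
  have : (Finset.univ : Finset (Fin 18)) =
      {0, 1, 2, 3, 4, 5, 6, 7, 8, 9, 10, 11, 12, 13, 14, 15, 16, 17} := by decide +kernel
  rw [this]
  simp only [Finset.image_insert, Finset.image_singleton]
  ext x
  simp only [Finset.mem_union, Finset.mem_insert, Finset.mem_singleton, or_assoc]

theorem sum_A4 (f : (Fin 4 → ℂ) → ℂ) : ∑ α ∈ A4dim, f α = ∑ k, f (vec4 k) := by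
  rw [A4_eq, Finset.sum_image (fun a _ b _ h => vec4_inj h)]

theorem mem_A4 (α : Fin 4 → ℂ) : α ∈ A4dim ↔ ∃ k, vec4 k = α := by
  rw [A4_eq]; simp

/-- cotangent relation -/
theorem ccot_rel (a b : ℂ) (ha : Complex.sin a ≠ 0) (hb : Complex.sin b ≠ 0)
    (hc : Complex.sin (a + b) ≠ 0) :
    ccot (a + b) * (ccot a + ccot b) = ccot a * ccot b - 1 := by
  unfold ccot
  rw [Complex.sin_add] at hc
  rw [Complex.cos_add, Complex.sin_add]
  rw [div_mul_eq_mul_div, div_eq_iff hc]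
  field_simp
  ring

theorem tri_M {a b c : Fin 18} (h : tri a b c) (i : Fin 4) : M4 c i = M4 a i + M4 b i := by
  obtain ⟨h0, h1, h2, h3⟩ := h
  fin_cases i
  · exact h0.symm
  · exact h1.symm
  · exact h2.symm
  · exact h3.symm

/-- product of wedges -/
def WC (x y : Fin 18) (i j p q : Fin 4) : ℂ := (wz x y i j : ℂ) * (wz x y p q : ℂ)

theorem core_sum (K : Fin 18 → Fin 18 → ℂ) (k : Fin 18 → Fin 18 → Fin 18 → ℂ)
    (t : Fin 18 → ℂ) (i j p q : Fin 4)
    (ht : ∀ a b c, tri a b c → t c * (t a + t b) = t a * t b - 1)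
    (hK : ∀ x y, x ≠ y → K x y = ∑ z, ((if tri x y z then - k x y z else 0) +
      (if tri x z y then k x z y else 0) + (if tri z y x then k z y x else 0))) :
    ∑ x, ∑ y, K x y * WC x y i j p q * (t x * t y) =
      - ∑ a, ∑ b, ∑ c, if tri a b c then k a b c * WC a b i j p q else 0 := by
  have h1 : ∀ x y, K x y * WC x y i j p q * (t x * t y) =
      (∑ z, if tri x y z then - k x y z * WC x y i j p q * (t x * t y) else 0) +
      (∑ z, if tri x z y then k x z y * WC x y i j p q * (t x * t y) else 0) +
      (∑ z, if tri z y x then k z y x * WC x y i j p q * (t x * t y) else 0) := by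
    intro x y
    by_cases hxy : x = y
    · subst hxy
      have : WC x x i j p q = 0 := by simp only [WC, wz]; push_cast; ring
      simp [this]
    · rw [hK x y hxy, ← Finset.sum_add_distrib, ← Finset.sum_add_distrib, Finset.sum_mul,
        Finset.sum_mul]
      apply Finset.sum_congr rfl
      intro z _
      split_ifs <;> ring
  simp_rw [h1, Finset.sum_add_distrib]
  have h2 : (∑ x, ∑ y, ∑ z, if tri x z y then k x z y * WC x y i j p q * (t x * t y) else 0) =
      ∑ a, ∑ b, ∑ c, if tri a b c then k a b c * WC a c i j p q * (t a * t c) else 0 := by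
    apply Finset.sum_congr rfl
    intro x _
    rw [Finset.sum_comm]
  have h3 : (∑ x, ∑ y, ∑ z, if tri z y x then k z y x * WC x y i j p q * (t x * t y) else 0) =
      ∑ a, ∑ b, ∑ c, if tri a b c then k a b c * WC c b i j p q * (t c * t b) else 0 := by
    rw [Finset.sum_comm]
    rw [Finset.sum_congr rfl fun b _ => Finset.sum_comm]
    rw [Finset.sum_comm]
  rw [h2, h3, ← Finset.sum_add_distrib, ← Finset.sum_add_distrib, ← Finset.sum_neg_distrib]
  apply Finset.sum_congr rfl; intro a _
  rw [← Finset.sum_add_distrib, ← Finset.sum_add_distrib, ← Finset.sum_neg_distrib]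
  apply Finset.sum_congr rfl; intro b _
  rw [← Finset.sum_add_distrib, ← Finset.sum_add_distrib, ← Finset.sum_neg_distrib]
  apply Finset.sum_congr rfl; intro c _
  split_ifs with h
  · have e1 : WC a c i j p q = WC a b i j p q := by
      simp only [WC, wz, tri_M h]; push_cast; ring
    have e2 : WC c b i j p q = WC a b i j p q := by
      simp only [WC, wz, tri_M h]; push_cast; ring
    rw [e1, e2]
    linear_combination (k a b c * WC a b i j p q) * ht a b c h
  · simp

theorem sum_tri (f : Fin 18 → Fin 18 → Fin 18 → ℂ) :
    (∑ a, ∑ b, ∑ c, if tri a b c then f a b c else 0) =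
      (T4.map fun x => f x.1 x.2.1 x.2.2).sum := by
  have h : (∑ a, ∑ b, ∑ c, if tri a b c then f a b c else 0) =
      ∑ x : Fin 18 × Fin 18 × Fin 18, if tri x.1 x.2.1 x.2.2 then f x.1 x.2.1 x.2.2 else 0 := by
    rw [Fintype.sum_prod_type]
    simp_rw [Fintype.sum_prod_type]
  rw [h, ← Finset.sum_filter]
  have h3 : (Finset.univ.filter fun x : Fin 18 × Fin 18 × Fin 18 => tri x.1 x.2.1 x.2.2) =
    T4.toFinset := by convert T4_eq
  rw [h3, ← List.sum_toFinset _ T4_nodup]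

/-- `12 p c_a c_b a(b^∨)` -/
def KC (r s : ℂ) (a b : Fin 18) : ℂ :=
  (KZ a b 0 : ℂ) * r ^ 2 + (KZ a b 1 : ℂ) * (r * s) + (KZ a b 2 : ℂ) * s ^ 2

def kC (r s : ℂ) (a b c : Fin 18) : ℂ :=
  (kt 0 a b c : ℂ) * r ^ 2 + (kt 1 a b c : ℂ) * (r * s) + (kt 2 a b c : ℂ) * s ^ 2

theorem KC_eq (r s : ℂ) (x y : Fin 18) (h : x ≠ y) :
    KC r s x y = ∑ z, ((if tri x y z then - kC r s x y z else 0) +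
      (if tri x z y then kC r s x z y else 0) + (if tri z y x then kC r s z y x else 0)) := by
  unfold KC
  rw [KZ_eq 0 x y h, KZ_eq 1 x y h, KZ_eq 2 x y h]
  push_cast
  rw [Finset.sum_mul, Finset.sum_mul, Finset.sum_mul, ← Finset.sum_add_distrib,
    ← Finset.sum_add_distrib]
  apply Finset.sum_congr rfl
  intro z _
  unfold gz kC
  split_ifs <;> push_cast <;> ring

theorem list_cast (l : List (Fin 18 × Fin 18 × Fin 18)) (f0 f1 f2 : Fin 18 × Fin 18 × Fin 18 → ℤ)
    (g : Fin 18 × Fin 18 × Fin 18 → ℂ) (r s : ℂ)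
    (h : ∀ x, g x = (f0 x : ℂ) * r ^ 2 + (f1 x : ℂ) * (r * s) + (f2 x : ℂ) * s ^ 2) :
    (l.map g).sum = ((l.map f0).sum : ℂ) * r ^ 2 + ((l.map f1).sum : ℂ) * (r * s) +
      ((l.map f2).sum : ℂ) * s ^ 2 := by
  induction l with
  | nil => simp
  | cons a l ih => simp only [List.map_cons, List.sum_cons, ih, h]; push_cast; ring

theorem const_C (r s : ℂ) (i j p q : Fin 4) :
    (∑ a, ∑ b, ∑ c, if tri a b c then kC r s a b c * WC a b i j p q else 0) =
      (cz 0 i j p q : ℂ) * r ^ 2 + (cz 1 i j p q : ℂ) * (r * s) + (cz 2 i j p q : ℂ) * s ^ 2 := by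
  rw [sum_tri, ← const_Z, ← const_Z, ← const_Z]
  apply list_cast
  intro x
  unfold kC WC
  push_cast
  ring

theorem core_C (r s : ℂ) (t : Fin 18 → ℂ) (i j p q : Fin 4)
    (ht : ∀ a b c, tri a b c → t c * (t a + t b) = t a * t b - 1) :
    ∑ x, ∑ y, KC r s x y * WC x y i j p q * (t x * t y) =
      - ((cz 0 i j p q : ℂ) * r ^ 2 + (cz 1 i j p q : ℂ) * (r * s) +
        (cz 2 i j p q : ℂ) * s ^ 2) := by
  rw [core_sum _ (kC r s) t i j p q ht (KC_eq r s), const_C]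

/-- multiplicities by type -/
def CC (r s : ℂ) (k : Fin 18) : ℂ :=
  (![2 * r + s, s * (s - 2 * r) / (4 * r + s), r, s] : Fin 4 → ℂ) (ty4 k)

/-- diagonal entries of `G` -/
def gg (r s : ℂ) (i : Fin 4) : ℂ :=
  (![3 * (2 * r + s), 3 * (2 * r + s), 3 * (2 * r + s),
    3 * s * (2 * r + s) / (4 * r + s)] : Fin 4 → ℂ) i

theorem gg_ne (r s : ℂ) (h4 : 4 * r + s ≠ 0) (hp : 2 * r + s ≠ 0) (hs : s ≠ 0) (i : Fin 4) :
    gg r s i ≠ 0 := by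
  fin_cases i <;> simp [gg, h4, hp, hs]

theorem G_diag (r s : ℂ) (h4 : 4 * r + s ≠ 0) (i p : Fin 4) :
    ∑ k, CC r s k * vec4 k i * vec4 k p = if i = p then gg r s i else 0 := by
  have h4' : r * 4 + s ≠ 0 := by rwa [mul_comm]
  fin_cases i <;> fin_cases p <;>
    simp [Fin.sum_univ_succ, CC, ty4, vec4, M4_tab, gg] <;> field_simp <;> ring

/-- pairing of dual vectors -/
def BB (r s : ℂ) (a b : Fin 18) : ℂ := ∑ i, vec4 a i * vec4 b i / gg r s i

theorem ty_facts : ∀ b, (ty4 b = 0 → M4 b 3 = 0) ∧ (ty4 b = 2 → M4 b 3 = 0) ∧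
    (ty4 b = 1 → M4 b 0 = 0 ∧ M4 b 1 = 0 ∧ M4 b 2 = 0) := by decide +kernel

theorem ty_facts2 : ∀ a b, ty4 a = 1 → a ≠ b → LZ a b 0 = 4 * yy a b ∧ LZ a b 1 = yy a b := by
  decide +kernel

theorem LC_eq (r s : ℂ) (h4 : 4 * r + s ≠ 0) (hp : 2 * r + s ≠ 0) (hs : s ≠ 0) (a b : Fin 18) :
    12 * (2 * r + s) * (CC r s b * BB r s a b) = (LZ a b 0 : ℂ) * r + (LZ a b 1 : ℂ) * s := by
  have h4' : r * 4 + s ≠ 0 := by rwa [mul_comm]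
  have hB : 12 * (2 * r + s) * BB r s a b = (xx a b : ℂ) + (yy a b : ℂ) * (4 * r + s) / s := by
    simp only [BB, Fin.sum_univ_four, vec4, gg, xx, yy]
    simp
    field_simp
    ring
  have hh : 12 * (2 * r + s) * (CC r s b * BB r s a b) =
      CC r s b * ((xx a b : ℂ) + (yy a b : ℂ) * (4 * r + s) / s) := by
    rw [← hB]; ring
  rw [hh]
  obtain ⟨f0, f2, f1⟩ := ty_facts b
  have hty : ty4 b = 0 ∨ ty4 b = 1 ∨ ty4 b = 2 ∨ ty4 b = 3 := by
    generalize ty4 b = u; fin_cases u <;> simp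
  rcases hty with h | h | h | h
  · have : yy a b = 0 := by simp [yy, f0 h]
    simp [CC, LZ, h, this]; ring
  · have : xx a b = 0 := by obtain ⟨u, v, w⟩ := f1 h; simp [xx, u, v, w]
    simp [CC, LZ, h, this]; field_simp; ring
  · have : yy a b = 0 := by simp [yy, f2 h]
    simp [CC, LZ, h, this]; ring
  · simp [CC, LZ, h]; field_simp; ring

theorem KC_val (r s : ℂ) (h4 : 4 * r + s ≠ 0) (hp : 2 * r + s ≠ 0) (hs : s ≠ 0) (a b : Fin 18)
    (hab : a ≠ b) :
    12 * (2 * r + s) * (CC r s a * CC r s b * BB r s a b) = KC r s a b := by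
  have h1 : 12 * (2 * r + s) * (CC r s a * CC r s b * BB r s a b) =
      CC r s a * ((LZ a b 0 : ℂ) * r + (LZ a b 1 : ℂ) * s) := by
    rw [← LC_eq r s h4 hp hs]; ring
  have h4' : r * 4 + s ≠ 0 := by rwa [mul_comm]
  rw [h1]
  have hty : ty4 a = 0 ∨ ty4 a = 1 ∨ ty4 a = 2 ∨ ty4 a = 3 := by
    generalize ty4 a = u; fin_cases u <;> simp
  rcases hty with h | h | h | h
  · simp [CC, KC, KZ, h]; ring
  · obtain ⟨u, v⟩ := ty_facts2 a b h hab
    rw [u, v]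
    simp [CC, KC, KZ, h]; field_simp; ring
  · simp [CC, KC, KZ, h]; ring
  · simp [CC, KC, KZ, h]; ring

theorem BB_symm (r s : ℂ) (a b : Fin 18) : BB r s a b = BB r s b a := by
  unfold BB; exact Finset.sum_congr rfl fun i _ => by ring

/-- the tensor `A_{ipq}` -/
def AT (r s : ℂ) (t : Fin 18 → ℂ) (i p q : Fin 4) : ℂ :=
  ∑ k, CC r s k * vec4 k i * vec4 k p * vec4 k q * t k

theorem AT_prod (r s : ℂ) (t : Fin 18 → ℂ) (i j p q : Fin 4) :
    ∑ k, AT r s t i p k * AT r s t j k q / gg r s k =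
      ∑ x, ∑ y, CC r s x * CC r s y * BB r s x y * (t x * t y) *
        (vec4 x i * vec4 x p * (vec4 y j * vec4 y q)) := by
  have h1 : ∀ k, AT r s t i p k * AT r s t j k q / gg r s k =
      ∑ x, ∑ y, CC r s x * CC r s y * (vec4 x k * vec4 y k / gg r s k) * (t x * t y) *
        (vec4 x i * vec4 x p * (vec4 y j * vec4 y q)) := by
    intro k
    unfold AT
    rw [Finset.sum_mul_sum, Finset.sum_div]
    refine Finset.sum_congr rfl fun x _ => ?_
    rw [Finset.sum_div]
    refine Finset.sum_congr rfl fun y _ => ?_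
    ring
  simp_rw [h1]
  rw [Finset.sum_comm]
  refine Finset.sum_congr rfl fun x _ => ?_
  rw [Finset.sum_comm]
  refine Finset.sum_congr rfl fun y _ => ?_
  rw [← Finset.sum_mul, ← Finset.sum_mul, ← Finset.mul_sum]
  rfl

theorem AT_comm (r s : ℂ) (h4 : 4 * r + s ≠ 0) (hp : 2 * r + s ≠ 0) (hs : s ≠ 0)
    (t : Fin 18 → ℂ) (i j p q : Fin 4)
    (ht : ∀ a b c, tri a b c → t c * (t a + t b) = t a * t b - 1) :
    384 * (2 * r + s) * (∑ k, AT r s t i p k * AT r s t j k q / gg r s k -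
      ∑ k, AT r s t j p k * AT r s t i k q / gg r s k) =
      - ((cz 0 i j p q : ℂ) * r ^ 2 + (cz 1 i j p q : ℂ) * (r * s) +
        (cz 2 i j p q : ℂ) * s ^ 2) := by
  rw [← core_C r s t i j p q ht]
  have hsw : ∀ i j : Fin 4, ∑ k, AT r s t i p k * AT r s t j k q / gg r s k =
      ∑ x, ∑ y, CC r s x * CC r s y * BB r s x y * (t x * t y) *
        (vec4 y i * vec4 y p * (vec4 x j * vec4 x q)) := by
    intro i j
    rw [AT_prod, Finset.sum_comm]
    refine Finset.sum_congr rfl fun x _ => Finset.sum_congr rfl fun y _ => ?_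
    rw [BB_symm]; ring
  have e : ∀ X Y : ℂ, 384 * (2 * r + s) * (X - Y) =
      192 * (2 * r + s) * ((X - Y) + (X - Y)) := by intros; ring
  rw [e]
  nth_rewrite 1 [AT_prod, AT_prod]
  rw [hsw, hsw]
  simp only [← Finset.sum_sub_distrib, ← Finset.sum_add_distrib, Finset.mul_sum]
  refine Finset.sum_congr rfl fun x _ => Finset.sum_congr rfl fun y _ => ?_
  by_cases hxy : x = y
  · subst hxy
    simp only [WC, wz]; push_cast; ring
  · rw [← KC_val r s h4 hp hs x y hxy]
    simp only [WC, wz, vec4]; push_cast; ring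

theorem ev_tri {a b c : Fin 18} (h : tri a b c) (x : Fin 4 → ℂ) :
    ev (vec4 c) x = ev (vec4 a) x + ev (vec4 b) x := by
  unfold ev
  rw [← Finset.sum_add_distrib]
  refine Finset.sum_congr rfl fun i _ => ?_
  simp only [vec4, tri_M h i]; push_cast; ring

theorem c_val (r s pmul qmul : ℂ)
    (hp : pmul = 2 * r + s)
    (hq : qmul = s * (s - 2 * r) / (4 * r + s))
    (c : (Fin 4 → ℂ) → ℂ)
    (hc1 : c (esgl4 0) = pmul ∧ c (esgl4 1) = pmul ∧ c (esgl4 2) = pmul)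
    (hc2 : c (esgl4 3) = qmul)
    (hc3 : ∀ p : Fin 4 × Fin 4, p.1 < p.2 → p.2 ≠ 3 →
      c (esgl4 p.1 + esgl4 p.2) = r ∧ c (esgl4 p.1 - esgl4 p.2) = r)
    (hc4 : ∀ b : Bool × Bool × Bool, c (halfvec b) = s) (k : Fin 18) :
    c (vec4 k) = CC r s k := by
  obtain ⟨u0, u1, u2⟩ := hc1
  rw [vec_e0, hp] at u0
  rw [vec_e1, hp] at u1
  rw [vec_e2, hp] at u2
  rw [vec_e3, hq] at hc2
  obtain ⟨v1, w1⟩ := hc3 (0, 1) (by decide) (by decide)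
  obtain ⟨v2, w2⟩ := hc3 (0, 2) (by decide) (by decide)
  obtain ⟨v3, w3⟩ := hc3 (1, 2) (by decide) (by decide)
  simp only [vec_p01, vec_p02, vec_p12, vec_m01, vec_m02, vec_m12] at v1 v2 v3 w1 w2 w3
  have z : ∀ b, c (vec4 (hidx b)) = s := fun b => by rw [← vec_h]; exact hc4 b
  fin_cases k
  · exact u0
  · exact u1
  · exact u2
  · exact hc2
  · exact v1
  · exact v2
  · exact v3
  · exact w1
  · exact w2
  · exact w3
  · exact z (true, true, true)
  · exact z (true, true, false)
  · exact z (true, false, true)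
  · exact z (true, false, false)
  · exact z (false, true, true)
  · exact z (false, true, false)
  · exact z (false, false, true)
  · exact z (false, false, false)

/-- reduced constant -/
def EE (r s : ℂ) (i j : Fin 4) : ℂ := if i = 3 ∨ j = 3 then s else 4 * r + s

theorem cz_val (r s : ℂ) (i j p q : Fin 4) :
    (cz 0 i j p q : ℂ) * r ^ 2 + (cz 1 i j p q : ℂ) * (r * s) + (cz 2 i j p q : ℂ) * s ^ 2 =
      ((if i = p ∧ j = q then 1 else 0) - (if j = p ∧ i = q then 1 else 0)) *
        (128 * (2 * r + s) * EE r s i j) := by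
  unfold cz EE
  split_ifs <;> simp <;> ring

theorem gg_mul (r s : ℂ) (h4 : 4 * r + s ≠ 0) (i j : Fin 4) (hij : i ≠ j) :
    gg r s i * gg r s j = 9 * (2 * r + s) ^ 2 * EE r s i j / (4 * r + s) := by
  have h4' : r * 4 + s ≠ 0 := by rwa [mul_comm]
  fin_cases i <;> fin_cases j <;> simp [gg, EE] at hij ⊢ <;> field_simp <;> ring

theorem final_id (r s : ℂ) (h4 : 4 * r + s ≠ 0) (hp : 2 * r + s ≠ 0) (lam : ℂ)
    (hl : lam ^ 2 = 108 * (2 * r + s) ^ 2 / (4 * r + s)) (i j p q : Fin 4) (X Y : ℂ)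
    (hXY : 384 * (2 * r + s) * (X - Y) = - ((cz 0 i j p q : ℂ) * r ^ 2 +
        (cz 1 i j p q : ℂ) * (r * s) + (cz 2 i j p q : ℂ) * s ^ 2)) :
    lam ^ 2 / 2 * X + 2 * (if i = p then gg r s i else 0) * 2⁻¹ *
        (2 * if j = q then gg r s j else 0) =
      lam ^ 2 / 2 * Y + 2 * (if j = p then gg r s j else 0) * 2⁻¹ *
        (2 * if i = q then gg r s i else 0) := by
  rw [cz_val] at hXY
  have h1 : X - Y = -(((if i = p ∧ j = q then 1 else 0) - (if j = p ∧ i = q then 1 else 0)) *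
        EE r s i j / 3) := by
    apply mul_left_cancel₀ (mul_ne_zero (by norm_num : (384 : ℂ) ≠ 0) hp)
    rw [hXY]; ring
  rw [hl]
  by_cases hij : i = j
  · subst hij
    simp only [sub_self, zero_mul, zero_div, neg_zero] at h1
    rw [sub_eq_zero.1 (by simpa [and_comm] using h1 : X - Y = 0)]
  · have h2 := gg_mul r s h4 i j hij
    have h3 : (if i = p then gg r s i else 0) * (if j = q then gg r s j else 0) =
        (if i = p ∧ j = q then 1 else 0) * (gg r s i * gg r s j) := by
      split_ifs <;> simp_all
    have h5 : (if j = p then gg r s j else 0) * (if i = q then gg r s i else 0) =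
        (if j = p ∧ i = q then 1 else 0) * (gg r s i * gg r s j) := by
      split_ifs <;> simp_all [mul_comm]
    rw [h2] at h3 h5
    linear_combination (108 * (2 * r + s) ^ 2 / (4 * r + s) / 2) * h1 + 2 * h3 - 2 * h5

theorem wdvv_part (r s : ℂ) (h4 : 4 * r + s ≠ 0) (hp : 2 * r + s ≠ 0) (hs : s ≠ 0)
    (c : (Fin 4 → ℂ) → ℂ) (hc : ∀ k, c (vec4 k) = CC r s k) (lam : ℂ)
    (hl : lam ^ 2 = 108 * (2 * r + s) ^ 2 / (4 * r + s)) : SatisfiesWDVV A4dim c lam := by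
  have hg := gg_ne r s h4 hp hs
  have hG : ∀ i p, ∑ α ∈ A4dim, c α * α i * α p = if i = p then gg r s i else 0 := by
    intro i p
    rw [sum_A4]; simp only [hc]; exact G_diag r s h4 i p
  have hF : Flast A4dim c = Matrix.diagonal (Sum.elim (fun i => 2 * gg r s i) (fun _ => 2)) := by
    ext p q
    rcases p with p | p <;> rcases q with q | q <;>
      simp [Flast, Matrix.diagonal_apply, hG]
  have hinv1 : Flast A4dim c * Matrix.diagonal
      (Sum.elim (fun i => (2 * gg r s i)⁻¹) (fun _ => 2⁻¹)) = 1 := by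
    rw [hF, Matrix.diagonal_mul_diagonal, ← Matrix.diagonal_one]
    congr 1
    funext p
    rcases p with p | p
    · have := hg p
      simp only [Sum.elim_inl]
      field_simp
    · simp
  have hinv := Matrix.inv_eq_right_inv hinv1
  refine ⟨?_, ?_⟩
  · exact IsUnit.of_mul_eq_one _ hinv1
  intro x hx i j
  rw [hinv]
  set t : Fin 18 → ℂ := fun k => ccot (ev (vec4 k) x) with htd
  have ht : ∀ a b c, tri a b c → t c * (t a + t b) = t a * t b - 1 := by
    intro a b d h
    have := ev_tri h x
    simp only [htd, this]
    apply ccot_rel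
    · exact hx _ ((mem_A4 _).2 ⟨a, rfl⟩)
    · exact hx _ ((mem_A4 _).2 ⟨b, rfl⟩)
    · rw [← this]; exact hx _ ((mem_A4 _).2 ⟨d, rfl⟩)
  have hA : ∀ i p q, ∑ α ∈ A4dim, c α * α i * α p * α q * ccot (ev α x) = AT r s t i p q := by
    intro i p q
    rw [sum_A4]; simp only [hc]; rfl
  have hAs1 : ∀ i j p, AT r s t i p j = AT r s t j p i := by
    intro i j p; unfold AT; exact Finset.sum_congr rfl fun k _ => by ring
  have hAs2 : ∀ i j p, AT r s t i j p = AT r s t j i p := by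
    intro i j p; unfold AT; exact Finset.sum_congr rfl fun k _ => by ring
  ext p q
  rw [Matrix.mul_apply, Matrix.mul_apply]
  rcases p with p | p <;> rcases q with q | q <;>
    simp only [Matrix.mul_diagonal, Fintype.sum_sum_type, Fmat, Matrix.of_apply,
      hA, hG, Sum.elim_inl, Sum.elim_inr, Finset.univ_unique, Finset.sum_singleton]
  · have key := AT_comm r s h4 hp hs t i j p q ht
    have e1 : ∀ i j, ∑ k, lam * AT r s t i p k * (2 * gg r s k)⁻¹ * (lam * AT r s t j k q) =
        lam ^ 2 / 2 * ∑ k, AT r s t i p k * AT r s t j k q / gg r s k := by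
      intro i j
      rw [Finset.mul_sum]
      refine Finset.sum_congr rfl fun k _ => ?_
      have := hg k
      field_simp
    rw [e1, e1]
    exact final_id r s h4 hp lam hl i j p q _ _ key
  · have e1 : ∀ i j, ∑ k, lam * AT r s t i p k * (2 * gg r s k)⁻¹ *
        (2 * if j = k then gg r s j else 0) = lam * AT r s t i p j := by
      intro i j
      rw [Finset.sum_eq_single j]
      · have := hg j
        simp; field_simp
      · intro b _ hb; simp [hb.symm]
      · simp
    rw [e1, e1, hAs1]; ring
  · have e1 : ∀ i j, ∑ k, (2 * if i = k then gg r s i else 0) * (2 * gg r s k)⁻¹ *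
        (lam * AT r s t j k q) = lam * AT r s t j i q := by
      intro i j
      rw [Finset.sum_eq_single i]
      · have := hg i
        simp; field_simp
      · intro b _ hb; simp [hb.symm]
      · simp
    rw [e1, e1, hAs2]; ring
  · have e1 : ∀ i j, ∑ k, (2 * if i = k then gg r s i else 0) * (2 * gg r s k)⁻¹ *
        (2 * if j = k then gg r s j else 0) = 2 * if i = j then gg r s i else 0 := by
      intro i j
      rw [Finset.sum_eq_single i]
      · have := hg i
        by_cases h : i = j
        · subst h; simp; field_simp
        · simp [h, Ne.symm h]
      · intro b _ hb; simp [hb.symm]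
      · simp
    rw [e1, e1]
    by_cases h : i = j
    · subst h; ring
    · simp [h, Ne.symm h]

theorem piv_ne : ∀ a, M4 a (piv4 a) ≠ 0 := by decide +kernel

theorem dv_iff (a : Fin 18) (f : Fin 4 → ℤ) :
    dvZ a (M4 a (piv4 a)) (f 0) (f 1) (f 2) (f 3) (f (piv4 a)) ↔
      ∃ m : ℤ, ∀ i, f i = m * M4 a i := by
  have hn := piv_ne a
  constructor
  · rintro ⟨h0, h1, h2, h3, hd⟩
    obtain ⟨m, hm⟩ := Int.dvd_of_emod_eq_zero hd
    have hall : ∀ i, f i * M4 a (piv4 a) = f (piv4 a) * M4 a i := by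
      intro i; fin_cases i
      · exact h0
      · exact h1
      · exact h2
      · exact h3
    refine ⟨m, fun i => ?_⟩
    apply mul_right_cancel₀ hn
    rw [hall i, hm]; ring
  · rintro ⟨m, hm⟩
    refine ⟨?_, ?_, ?_, ?_, ?_⟩
    all_goals simp only [hm]
    · ring
    · ring
    · ring
    · ring
    · simp

theorem rel_iff (a g b : Fin 18) : SeriesRel (vec4 a) (vec4 g) (vec4 b) ↔ relZ a g b := by
  have h1 := dv_iff a (fun i => M4 g i + M4 b i)
  have h2 := dv_iff a (fun i => M4 g i - M4 b i)
  unfold relZ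
  rw [h1, h2, ← exists_or]
  unfold SeriesRel
  refine exists_congr fun m => or_congr ?_ ?_
  · rw [funext_iff]
    refine forall_congr' fun i => ?_
    simp only [vec4, Pi.add_apply, Pi.smul_apply, smul_eq_mul]
    constructor
    · intro h
      have : (M4 g i : ℂ) + M4 b i = m * M4 a i := by linear_combination 2 * h
      exact_mod_cast this
    · intro h
      have : (M4 g i : ℂ) + M4 b i = m * M4 a i := by exact_mod_cast h
      linear_combination this / 2
  · rw [funext_iff]
    refine forall_congr' fun i => ?_
    simp only [vec4, Pi.sub_apply, Pi.smul_apply, smul_eq_mul]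
    constructor
    · intro h
      have : (M4 g i : ℂ) - M4 b i = m * M4 a i := by linear_combination 2 * h
      exact_mod_cast this
    · intro h
      have : (M4 g i : ℂ) - M4 b i = m * M4 a i := by exact_mod_cast h
      linear_combination this / 2

theorem rel_symm {α β γ : Fin 4 → ℂ} (h : SeriesRel α β γ) : SeriesRel α γ β := by
  obtain ⟨m, h | h⟩ := h
  · exact ⟨m, Or.inl (by rw [add_comm]; exact h)⟩
  · exact ⟨-m, Or.inr (by rw [← neg_sub, h]; simp)⟩

theorem list_cast2 (l : List (Fin 18)) (f0 f1 : Fin 18 → ℤ) (r s : ℂ) :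
    (l.map fun b => (f0 b : ℂ) * r + (f1 b : ℂ) * s).sum =
      ((l.map f0).sum : ℂ) * r + ((l.map f1).sum : ℂ) * s := by
  induction l with
  | nil => simp
  | cons a l ih => simp only [List.map_cons, List.sum_cons, ih]; push_cast; ring

theorem wedge_exp (a b : Fin 18) (u v : Fin 4 → ℂ) :
    wedge (vec4 a) (vec4 b) u v = ∑ i, ∑ j, (wz a b i j : ℂ) / 4 * (u i * v j) := by
  unfold wedge ev
  rw [Finset.sum_mul_sum, Finset.sum_mul_sum, Finset.sum_comm (γ := Fin 4)
    (f := fun i j => vec4 a i * v i * (vec4 b j * u j)), ← Finset.sum_sub_distrib]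
  refine Finset.sum_congr rfl fun i _ => ?_
  rw [← Finset.sum_sub_distrib]
  refine Finset.sum_congr rfl fun j _ => ?_
  simp only [vec4, wz]; push_cast; ring

theorem vsys_part (r s : ℂ) (h4 : 4 * r + s ≠ 0) (hp : 2 * r + s ≠ 0) (hs : s ≠ 0)
    (c : (Fin 4 → ℂ) → ℂ) (hc : ∀ k, c (vec4 k) = CC r s k)
    (dual : (Fin 4 → ℂ) → Fin 4 → ℂ) (hd : IsDual A4dim c dual) :
    IsTrigVSystem A4dim c dual := by
  have hg := gg_ne r s h4 hp hs
  have hdual : ∀ b i, dual (vec4 b) i = vec4 b i / gg r s i := by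
    intro b i
    have h := hd (vec4 b) ((mem_A4 _).2 ⟨b, rfl⟩) (Pi.single i 1)
    have hev : ∀ k, ev (vec4 k) (Pi.single i 1) = vec4 k i := by
      intro k; simp [ev, Pi.single_apply]
    rw [hev] at h
    rw [eq_div_iff (hg i), ← h]
    unfold Gform
    rw [sum_A4]
    simp only [hc, hev]
    have h2 : ∀ k, CC r s k * ev (vec4 k) (dual (vec4 b)) * vec4 k i =
        ∑ l, dual (vec4 b) l * (CC r s k * vec4 k l * vec4 k i) := by
      intro k
      unfold ev
      rw [Finset.mul_sum, Finset.sum_mul]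
      exact Finset.sum_congr rfl fun l _ => by ring
    simp_rw [h2]
    rw [Finset.sum_comm]
    simp_rw [← Finset.mul_sum, G_diag r s h4]
    simp
  have hev : ∀ a b, ev (vec4 a) (dual (vec4 b)) = BB r s a b := by
    intro a b
    unfold ev BB
    exact Finset.sum_congr rfl fun i _ => by rw [hdual]; ring
  intro α hα Γ hΓ u v
  obtain ⟨a, rfl⟩ := (mem_A4 _).1 hα
  obtain ⟨⟨γ, hγ⟩, hG1, hG2, hG3⟩ := hΓ
  obtain ⟨g, rfl⟩ := (mem_A4 _).1 (hG1 γ hγ).1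
  obtain ⟨l, hl, hgl, hlb⟩ := cls4_spec a g
  have hΓe : Γ = (l.toFinset.filter fun b => ¬ Collin (vec4 a) (vec4 b)).image vec4 := by
    ext β
    simp only [Finset.mem_image, Finset.mem_filter, List.mem_toFinset]
    constructor
    · intro hβ
      obtain ⟨b, rfl⟩ := (mem_A4 _).1 (hG1 β hβ).1
      exact ⟨b, ⟨(hlb b).1 ((rel_iff a g b).1 (hG2 _ hγ _ hβ)), (hG1 _ hβ).2⟩, rfl⟩
    · rintro ⟨b, ⟨hb, hb2⟩, rfl⟩
      exact hG3 _ ((mem_A4 _).2 ⟨b, rfl⟩) hb2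
        ⟨_, hγ, rel_symm ((rel_iff a g b).2 ((hlb b).2 hb))⟩
  rw [hΓe, Finset.sum_image (fun a _ b _ h => vec4_inj h), Finset.sum_filter]
  have hz : ∀ b, (if ¬ Collin (vec4 a) (vec4 b) then
      c (vec4 b) * ev (vec4 a) (dual (vec4 b)) * wedge (vec4 a) (vec4 b) u v else 0) =
      c (vec4 b) * ev (vec4 a) (dual (vec4 b)) * wedge (vec4 a) (vec4 b) u v := by
    intro b
    split_ifs with h
    · obtain ⟨t, ht⟩ := h
      have e : ∀ w, ev (vec4 b) w = t * ev (vec4 a) w := by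
        intro w; rw [ht]; unfold ev; rw [Finset.mul_sum]
        exact Finset.sum_congr rfl fun i _ => by simp [mul_assoc]
      simp only [wedge, e]; ring
    · rfl
  simp_rw [hz, hc, hev, wedge_exp, Finset.mul_sum]
  rw [Finset.sum_comm]
  refine Finset.sum_eq_zero fun i _ => ?_
  rw [Finset.sum_comm]
  refine Finset.sum_eq_zero fun j _ => ?_
  have h0 := vsys_Z a l hl i j 0
  have h1 := vsys_Z a l hl i j 1
  have h2 := list_cast2 l (fun b => LZ a b 0 * wz a b i j) (fun b => LZ a b 1 * wz a b i j) r s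
  rw [h0, h1, ← List.sum_toFinset _ (cls4_nodup a l hl)] at h2
  have h3 : 48 * (2 * r + s) * ∑ b ∈ l.toFinset, CC r s b * BB r s a b *
      ((wz a b i j : ℂ) / 4 * (u i * v j)) = 0 := by
    have : 48 * (2 * r + s) * ∑ b ∈ l.toFinset, CC r s b * BB r s a b *
      ((wz a b i j : ℂ) / 4 * (u i * v j)) = (∑ b ∈ l.toFinset,
        (((LZ a b 0 * wz a b i j : ℤ) : ℂ) * r + ((LZ a b 1 * wz a b i j : ℤ) : ℂ) * s)) *
          (u i * v j) := by
      rw [Finset.mul_sum, Finset.sum_mul]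
      refine Finset.sum_congr rfl fun b _ => ?_
      push_cast
      linear_combination (wz a b i j : ℂ) * (u i * v j) * LC_eq r s h4 hp hs a b
    rw [this, h2]; simp
  have h48 : 48 * (2 * r + s) ≠ 0 := mul_ne_zero (by norm_num) hp
  exact (mul_eq_zero.1 h3).resolve_left h48

/-- the four-dimensional family of configurations with multiplicities
`p = 2r + s`, `q = s(s-2r)/(4r+s)` on `e^1,e^2,e^3` resp. `e^4`, `r` on `e^i ± e^j`
(`i < j ≤ 3`) and `s` on `(1/2)(e^1 ± e^2 ± e^3 ± e^4)` is a trigonometric ∨-system,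
and with `λ² = 108(2r+s)²/(4r+s)` it satisfies the trigonometric WDVV equations. -/
theorem fourDim_trigVSystem_and_WDVV (r s pmul qmul : ℂ)
    (h4 : 4 * r + s ≠ 0)
    (hp : pmul = 2 * r + s)
    (hq : qmul = s * (s - 2 * r) / (4 * r + s))
    (hps : pmul * s ≠ 0)
    (c : (Fin 4 → ℂ) → ℂ)
    (hc1 : c (esgl4 0) = pmul ∧ c (esgl4 1) = pmul ∧ c (esgl4 2) = pmul)
    (hc2 : c (esgl4 3) = qmul)
    (hc3 : ∀ p : Fin 4 × Fin 4, p.1 < p.2 → p.2 ≠ 3 →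
      c (esgl4 p.1 + esgl4 p.2) = r ∧ c (esgl4 p.1 - esgl4 p.2) = r)
    (hc4 : ∀ b : Bool × Bool × Bool, c (halfvec b) = s) :
    (∀ dual : (Fin 4 → ℂ) → Fin 4 → ℂ, IsDual A4dim c dual →
      IsTrigVSystem A4dim c dual) ∧
    ∀ lam : ℂ, lam ^ 2 = 108 * (2 * r + s) ^ 2 / (4 * r + s) →
      SatisfiesWDVV A4dim c lam := by
  have hps' : pmul ≠ 0 := left_ne_zero_of_mul hps
  have hs : s ≠ 0 := right_ne_zero_of_mul hps
  have hp2 : 2 * r + s ≠ 0 := hp ▸ hps'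
  have hc := c_val r s pmul qmul hp hq c hc1 hc2 hc3 hc4
  exact ⟨fun dual hd => vsys_part r s h4 hp2 hs c hc dual hd,
    fun lam hl => wdvv_part r s h4 hp2 hs c hc lam hl⟩

end
end

section
/- Let r, s ∈ ℂ with (2r+s)(4r+s) ≠ 0. Let F₄⁺ ⊂ (ℂ⁴)* be the positive half of the root system F₄, consisting of the covectors e^i (1 ≤ i ≤ 4) and (1/2)(e^1 ± e^2 ± e^3 ± e^4) (all eight sign choices), each with multiplicity s, and e^i ± e^j (1 ≤ i < j ≤ 4), each with multiplicity r. Then for any λ ∈ ℂ with λ² = 108(2r+s)²/(4r+s), the triple (F₄⁺, c, λ) satisfies the trigonometric WDVV equations. -/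
open scoped Classical
open Finset

noncomputable section

/-- The positive half `F₄⁺` of the root system `F₄`: the covectors `e^i` (`1 ≤ i ≤ 4`),
`(1/2)(e^1 ± e^2 ± e^3 ± e^4)` and `e^i ± e^j` (`1 ≤ i < j ≤ 4`). -/
def F4plus : Finset (Fin 4 → ℂ) :=
  (Finset.univ.image esgl4) ∪
  ((Finset.univ.filter (fun p : Fin 4 × Fin 4 => p.1 < p.2)).image
    (fun p => esgl4 p.1 + esgl4 p.2)) ∪
  ((Finset.univ.filter (fun p : Fin 4 × Fin 4 => p.1 < p.2)).image
    (fun p => esgl4 p.1 - esgl4 p.2)) ∪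
  ((Finset.univ : Finset (Bool × Bool × Bool)).image halfvec)
/-- Doubled coordinates of the 24 covectors: `0..11` short, `12..23` long. -/
def Vt : Fin 24 → Fin 4 → ℤ :=
  ![![2, 0, 0, 0], ![0, 2, 0, 0], ![0, 0, 2, 0], ![0, 0, 0, 2], ![1, 1, 1, 1], ![1, 1, 1, -1],
   ![1, 1, -1, 1], ![1, 1, -1, -1], ![1, -1, 1, 1], ![1, -1, 1, -1], ![1, -1, -1, 1], ![1, -1, -1, -1],
   ![2, 2, 0, 0], ![2, 0, 2, 0], ![2, 0, 0, 2], ![0, 2, 2, 0], ![0, 2, 0, 2], ![0, 0, 2, 2],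
   ![2, -2, 0, 0], ![2, 0, -2, 0], ![2, 0, 0, -2], ![0, 2, -2, 0], ![0, 2, 0, -2], ![0, 0, 2, -2]]

/-- The same covectors as elements of `(ℂ^4)^*`. -/
def vc : Fin 24 → Fin 4 → ℂ :=
  ![esgl4 0, esgl4 1, esgl4 2, esgl4 3,
   halfvec (true, true, true), halfvec (true, true, false), halfvec (true, false, true), halfvec (true, false, false),
   halfvec (false, true, true), halfvec (false, true, false), halfvec (false, false, true), halfvec (false, false, false),
   esgl4 0 + esgl4 1, esgl4 0 + esgl4 2, esgl4 0 + esgl4 3, esgl4 1 + esgl4 2,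
   esgl4 1 + esgl4 3, esgl4 2 + esgl4 3, esgl4 0 - esgl4 1, esgl4 0 - esgl4 2,
   esgl4 0 - esgl4 3, esgl4 1 - esgl4 2, esgl4 1 - esgl4 3, esgl4 2 - esgl4 3]

/-- All triples `(a, b, g)` of indices with `a + b = g` as covectors. -/
def triples : List (Fin 24 × Fin 24 × Fin 24) :=
  [(0, 1, 12), (0, 2, 13), (0, 3, 14), (1, 2, 15), (1, 3, 16), (1, 8, 4), (1, 9, 5), (1, 10, 6),
   (1, 11, 7), (1, 18, 0), (2, 3, 17), (2, 6, 4), (2, 7, 5), (2, 10, 8), (2, 11, 9), (2, 19, 0),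
   (2, 21, 1), (3, 5, 4), (3, 7, 6), (3, 9, 8), (3, 11, 10), (3, 20, 0), (3, 22, 1), (3, 23, 2),
   (4, 7, 12), (4, 9, 13), (4, 10, 14), (4, 11, 0), (5, 6, 12), (5, 8, 13), (5, 10, 0), (5, 11, 20),
   (6, 8, 14), (6, 9, 0), (6, 11, 19), (6, 23, 5), (7, 8, 0), (7, 9, 20), (7, 10, 19), (7, 17, 4),
   (8, 11, 18), (8, 21, 6), (8, 22, 5), (9, 10, 18), (9, 16, 4), (9, 21, 7), (10, 15, 4), (10, 22, 7),
   (10, 23, 9), (11, 15, 5), (11, 16, 6), (11, 17, 8), (13, 21, 12), (14, 22, 12), (14, 23, 13), (15, 18, 13),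
   (15, 19, 12), (16, 18, 14), (16, 20, 12), (16, 23, 15), (17, 19, 14), (17, 20, 13), (17, 21, 16), (17, 22, 15),
   (18, 21, 19), (18, 22, 20), (19, 23, 20), (21, 23, 22)]

/-- Multiplicities along the enumeration. -/
def mu (r s : ℂ) (k : Fin 24) : ℂ := if k < 12 then s else r

/-- The cubic tensor (scaled by 8). -/
def Tt (r s : ℂ) (t : Fin 24 → ℂ) (i p q : Fin 4) : ℂ :=
  ∑ k, mu r s k * Vt k i * Vt k p * Vt k q * t k

/-- The coefficient with which a cotangent relation enters. -/
def kap (r s : ℂ) (a b g : Fin 24) : ℂ :=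
  if 12 ≤ a ∧ 12 ≤ b then -4 * r ^ 2 else if a < 12 ∧ b < 12 ∧ g < 12 then -2 * s ^ 2 else -4 * r * s

/-- Minors of the table `Vt`. -/
def Wt (i j : Fin 4) (a b : Fin 24) : ℂ := ((Vt a i * Vt b j - Vt a j * Vt b i : ℤ) : ℂ)

lemma Tt_comm12 (r s : ℂ) (t : Fin 24 → ℂ) (i p q : Fin 4) : Tt r s t i p q = Tt r s t p i q := by
  unfold Tt; exact Finset.sum_congr rfl fun k _ => by ring

lemma Tt_comm23 (r s : ℂ) (t : Fin 24 → ℂ) (i p q : Fin 4) : Tt r s t i p q = Tt r s t i q p := by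
  unfold Tt; exact Finset.sum_congr rfl fun k _ => by ring

lemma triples_spec : ∀ τ ∈ triples, Vt τ.1 + Vt τ.2.1 = Vt τ.2.2 := by
  simp only [triples, List.forall_mem_cons, List.not_mem_nil, false_implies, implies_true, and_true]
  and_intros <;> simp [Vt]

set_option maxHeartbeats 4000000 in
set_option maxRecDepth 10000 in
lemma core_lt (r s : ℂ) (t : Fin 24 → ℂ)
    (h : ∀ τ ∈ triples, t τ.1 * t τ.2.1 - t τ.2.2 * (t τ.1 + t τ.2.1) - 1 = 0)
    (i j p q : Fin 4) (hij : i < j) (hpq : p < q)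
    (hle : i < p ∨ (i = p ∧ j ≤ q)) :
    ∑ m, (Tt r s t i p m * Tt r s t j m q - Tt r s t j p m * Tt r s t i m q) =
      -64 * (2 * r + s) * (4 * r + s) *
        ((if i = p then 1 else 0) * (if j = q then 1 else 0)
          - (if i = q then 1 else 0) * (if j = p then 1 else 0)) := by
  have H : (triples.map fun τ => kap r s τ.1 τ.2.1 τ.2.2 * Wt i j τ.1 τ.2.1 * Wt p q τ.1 τ.2.1 *
      (t τ.1 * t τ.2.1 - t τ.2.2 * (t τ.1 + t τ.2.1) - 1)).sum = 0 := by
    apply List.sum_eq_zero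
    intro y hy
    obtain ⟨τ, hτ, rfl⟩ := List.mem_map.1 hy
    rw [h τ hτ, mul_zero]
  clear h
  revert hij hpq hle H
  fin_cases i <;> fin_cases j <;> fin_cases p <;> fin_cases q <;> intro hij hpq hle H <;>
    first
    | exact absurd hij (by decide)
    | exact absurd hpq (by decide)
    | exact absurd hle (by decide)
    | (simp [triples, kap, Wt, Vt] at H
       simp [Tt, mu, Vt, Fin.sum_univ_ofNat]
       linear_combination H)

/-- The commutator of two of the matrices `Tt r s t i`. -/
def Cm (r s : ℂ) (t : Fin 24 → ℂ) (i j p q : Fin 4) : ℂ :=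
  ∑ m, (Tt r s t i p m * Tt r s t j m q - Tt r s t j p m * Tt r s t i m q)

lemma Cm_swap12 (r s : ℂ) (t : Fin 24 → ℂ) (i j p q : Fin 4) :
    Cm r s t i j p q = - Cm r s t j i p q := by
  unfold Cm; rw [← Finset.sum_neg_distrib]; exact Finset.sum_congr rfl fun k _ => by ring

lemma Cm_swap34 (r s : ℂ) (t : Fin 24 → ℂ) (i j p q : Fin 4) :
    Cm r s t i j p q = - Cm r s t i j q p := by
  unfold Cm; rw [← Finset.sum_neg_distrib]
  refine Finset.sum_congr rfl fun k _ => ?_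
  rw [Tt_comm23 r s t i p k, Tt_comm23 r s t j k q, Tt_comm23 r s t j p k, Tt_comm23 r s t i k q]
  ring

lemma Cm_swap (r s : ℂ) (t : Fin 24 → ℂ) (i j p q : Fin 4) :
    Cm r s t i j p q = Cm r s t p q i j := by
  unfold Cm
  refine Finset.sum_congr rfl fun k _ => ?_
  rw [Tt_comm12 r s t p i k, Tt_comm23 r s t q k j, Tt_comm12 r s t q j k, Tt_comm23 r s t j q k,
    Tt_comm12 r s t q i k, Tt_comm23 r s t i q k, Tt_comm23 r s t p k j, Tt_comm12 r s t p j k]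
  ring

lemma core (r s : ℂ) (t : Fin 24 → ℂ)
    (h : ∀ τ ∈ triples, t τ.1 * t τ.2.1 - t τ.2.2 * (t τ.1 + t τ.2.1) - 1 = 0)
    (i j p q : Fin 4) :
    Cm r s t i j p q = -64 * (2 * r + s) * (4 * r + s) *
        ((if i = p then 1 else 0) * (if j = q then 1 else 0)
          - (if i = q then 1 else 0) * (if j = p then 1 else 0)) := by
  have h1 : ∀ i j p q : Fin 4, i < j → p < q →
      Cm r s t i j p q = -64 * (2 * r + s) * (4 * r + s) *
        ((if i = p then 1 else 0) * (if j = q then 1 else 0)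
          - (if i = q then 1 else 0) * (if j = p then 1 else 0)) := by
    intro i j p q hij hpq
    by_cases hle : i < p ∨ (i = p ∧ j ≤ q)
    · exact core_lt r s t h i j p q hij hpq hle
    · rw [Cm_swap]
      have := core_lt r s t h p q i j hpq hij (by omega)
      unfold Cm
      rw [this]
      simp only [eq_comm (a := p), eq_comm (a := q)]
      ring
  have h2 : ∀ i j p q : Fin 4, i < j →
      Cm r s t i j p q = -64 * (2 * r + s) * (4 * r + s) *
        ((if i = p then 1 else 0) * (if j = q then 1 else 0)
          - (if i = q then 1 else 0) * (if j = p then 1 else 0)) := by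
    intro i j p q hij
    rcases lt_trichotomy p q with hpq | rfl | hpq
    · exact h1 i j p q hij hpq
    · have := Cm_swap34 r s t i j p p
      have h0 : Cm r s t i j p p = 0 := by linear_combination this / 2
      rw [h0]; ring
    · rw [Cm_swap34, h1 i j q p hij hpq]; ring
  rcases lt_trichotomy i j with hij | rfl | hij
  · exact h2 i j p q hij
  · have := Cm_swap12 r s t i i p q
    have h0 : Cm r s t i i p q = 0 := by linear_combination this / 2
    rw [h0]; ring
  · rw [Cm_swap12, h2 j i p q hij]; ring

lemma vc_apply (k : Fin 24) (i : Fin 4) : vc k i = (Vt k i : ℂ) / 2 := by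
  revert i
  have e : ∀ i j, esgl4 i j = if j = i then 1 else 0 := fun i j => Pi.single_apply i 1 j
  fin_cases k <;> rw [Fin.forall_fin_succ, Fin.forall_fin_succ, Fin.forall_fin_succ, Fin.forall_fin_one] <;> simp [vc, Vt, e, halfvec, sgn] <;> norm_num

lemma Vt_inj : Function.Injective Vt := by
  set_option maxRecDepth 20000 in decide

lemma vc_inj : Function.Injective vc := by
  intro a b hab
  apply Vt_inj
  funext i
  have := congrFun hab i
  rw [vc_apply, vc_apply] at this
  have h2 : (Vt a i : ℂ) = Vt b i := by linear_combination 2 * this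
  exact_mod_cast h2

lemma F4plus_eq : F4plus = Finset.univ.image vc := by
  apply Finset.Subset.antisymm
  · intro α hα
    simp only [F4plus, Finset.mem_union, Finset.mem_image, Finset.mem_filter, Finset.mem_univ,
      true_and] at hα ⊢
    rcases hα with ((⟨i, rfl⟩ | ⟨⟨i, j⟩, hij, rfl⟩) | ⟨⟨i, j⟩, hij, rfl⟩) | ⟨⟨a, b, d⟩, rfl⟩
    · fin_cases i
      exacts [⟨0, rfl⟩, ⟨1, rfl⟩, ⟨2, rfl⟩, ⟨3, rfl⟩]
    · fin_cases i <;> fin_cases j <;> first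
        | exact absurd hij (by decide)
        | exact ⟨12, rfl⟩
        | exact ⟨13, rfl⟩
        | exact ⟨14, rfl⟩
        | exact ⟨15, rfl⟩
        | exact ⟨16, rfl⟩
        | exact ⟨17, rfl⟩
    · fin_cases i <;> fin_cases j <;> first
        | exact absurd hij (by decide)
        | exact ⟨18, rfl⟩
        | exact ⟨19, rfl⟩
        | exact ⟨20, rfl⟩
        | exact ⟨21, rfl⟩
        | exact ⟨22, rfl⟩
        | exact ⟨23, rfl⟩
    · cases a <;> cases b <;> cases d
      exacts [⟨11, rfl⟩, ⟨10, rfl⟩, ⟨9, rfl⟩, ⟨8, rfl⟩, ⟨7, rfl⟩, ⟨6, rfl⟩, ⟨5, rfl⟩, ⟨4, rfl⟩]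
  · intro α hα
    obtain ⟨k, -, rfl⟩ := Finset.mem_image.1 hα
    have hs : ∀ i, esgl4 i ∈ F4plus := fun i => by
      simp only [F4plus, Finset.mem_union]
      exact Or.inl (Or.inl (Or.inl (Finset.mem_image_of_mem _ (Finset.mem_univ _))))
    have hh : ∀ b, halfvec b ∈ F4plus := fun b => by
      simp only [F4plus, Finset.mem_union]
      exact Or.inr (Finset.mem_image_of_mem _ (Finset.mem_univ _))
    have hp : ∀ i j, i < j → esgl4 i + esgl4 j ∈ F4plus := fun i j hij => by
      simp only [F4plus, Finset.mem_union]
      exact Or.inl (Or.inl (Or.inr (Finset.mem_image.2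
        ⟨(i, j), Finset.mem_filter.2 ⟨Finset.mem_univ _, hij⟩, rfl⟩)))
    have hm : ∀ i j, i < j → esgl4 i - esgl4 j ∈ F4plus := fun i j hij => by
      simp only [F4plus, Finset.mem_union]
      exact Or.inl (Or.inr (Finset.mem_image.2
        ⟨(i, j), Finset.mem_filter.2 ⟨Finset.mem_univ _, hij⟩, rfl⟩))
    fin_cases k <;> first
      | exact hs _
      | exact hh _
      | exact hp _ _ (by decide)
      | exact hm _ _ (by decide)

lemma sum_F4 (f : (Fin 4 → ℂ) → ℂ) : ∑ α ∈ F4plus, f α = ∑ k, f (vc k) := by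
  rw [F4plus_eq, Finset.sum_image fun a _ b _ h => vc_inj h]

lemma c_vc (r s : ℂ) (c : (Fin 4 → ℂ) → ℂ)
    (hc1 : ∀ i : Fin 4, c (esgl4 i) = s)
    (hc2 : ∀ b : Bool × Bool × Bool, c (halfvec b) = s)
    (hc3 : ∀ p : Fin 4 × Fin 4, p.1 < p.2 →
      c (esgl4 p.1 + esgl4 p.2) = r ∧ c (esgl4 p.1 - esgl4 p.2) = r) (k : Fin 24) :
    c (vc k) = mu r s k := by
  have hs : ∀ k : Fin 24, k < 12 → mu r s k = s := fun k hk => if_pos hk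
  have hr : ∀ k : Fin 24, ¬ k < 12 → mu r s k = r := fun k hk => if_neg hk
  fin_cases k <;> first
    | exact (hc1 _).trans (hs _ (by decide)).symm
    | exact (hc2 _).trans (hs _ (by decide)).symm
    | exact (hc3 (_, _) (by decide)).1.trans (hr _ (by decide)).symm
    | exact (hc3 (_, _) (by decide)).2.trans (hr _ (by decide)).symm

lemma quad_sum (r s : ℂ) (p q : Fin 4) :
    ∑ k, mu r s k * (Vt k p : ℂ) * Vt k q = if p = q then 12 * (2 * r + s) else 0 := by
  fin_cases p <;> fin_cases q <;> simp [mu, Vt, Fin.sum_univ_ofNat] <;> ring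

lemma cot_rel (a b : ℂ) (ha : Complex.sin a ≠ 0) (hb : Complex.sin b ≠ 0)
    (hab : Complex.sin (a + b) ≠ 0) :
    ccot a * ccot b - ccot (a + b) * (ccot a + ccot b) - 1 = 0 := by
  unfold ccot
  field_simp
  rw [Complex.sin_add, Complex.cos_add]
  ring


/-- the positive half of `F₄` with multiplicity `s` on short roots and
`r` on long roots satisfies the trigonometric WDVV equations for
`λ² = 108(2r+s)²/(4r+s)`. -/
theorem F4_satisfies_WDVV (r s : ℂ)
    (hrs : (2 * r + s) * (4 * r + s) ≠ 0)
    (c : (Fin 4 → ℂ) → ℂ)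
    (hc1 : ∀ i : Fin 4, c (esgl4 i) = s)
    (hc2 : ∀ b : Bool × Bool × Bool, c (halfvec b) = s)
    (hc3 : ∀ p : Fin 4 × Fin 4, p.1 < p.2 →
      c (esgl4 p.1 + esgl4 p.2) = r ∧ c (esgl4 p.1 - esgl4 p.2) = r)
    (lam : ℂ) (hlam : lam ^ 2 = 108 * (2 * r + s) ^ 2 / (4 * r + s)) :
    SatisfiesWDVV F4plus c lam := by
  have h2 : 2 * r + s ≠ 0 := left_ne_zero_of_mul hrs
  have h4 : 4 * r + s ≠ 0 := right_ne_zero_of_mul hrs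
  have hc := c_vc r s c hc1 hc2 hc3
  have hG : ∀ p q : Fin 4, ∑ α ∈ F4plus, c α * α p * α q =
      if p = q then 3 * (2 * r + s) else 0 := by
    intro p q
    rw [sum_F4]
    have h := quad_sum r s p q
    have e : ∑ k, c (vc k) * vc k p * vc k q =
        (1 / 4) * ∑ k, mu r s k * (Vt k p : ℂ) * Vt k q := by
      rw [Finset.mul_sum]
      refine Finset.sum_congr rfl fun k _ => ?_
      rw [hc, vc_apply, vc_apply]; ring
    rw [e, h]
    split_ifs <;> ring
  have hF : Flast F4plus c = Matrix.diagonal (Sum.elim (fun _ => 6 * (2 * r + s)) (fun _ => 2)) := by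
    ext p q
    rcases p with p | p <;> rcases q with q | q
    · simp only [Flast, Matrix.of_apply, hG, Matrix.diagonal_apply, Sum.inl.injEq, Sum.elim_inl]
      split_ifs <;> ring
    · simp [Flast]
    · simp [Flast]
    · simp [Flast]
  have hD : Matrix.diagonal (Sum.elim (fun _ : Fin 4 => 6 * (2 * r + s)) (fun _ : Unit => (2 : ℂ))) *
      Matrix.diagonal (Sum.elim (fun _ => (6 * (2 * r + s))⁻¹) (fun _ => (2 : ℂ)⁻¹)) = 1 := by
    rw [Matrix.diagonal_mul_diagonal, ← Matrix.diagonal_one]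
    congr 1
    funext k
    rcases k with k | k
    · simp only [Sum.elim_inl]; field_simp
    · simp
  refine ⟨?_, ?_⟩
  · rw [hF, Matrix.isUnit_iff_isUnit_det]
    exact Matrix.isUnit_det_of_right_inverse hD
  intro x hx i j
  rw [hF, Matrix.inv_eq_right_inv hD]
  set t : Fin 24 → ℂ := fun k => ccot (ev (vc k) x) with ht
  have hA : ∀ i p q : Fin 4, ∑ α ∈ F4plus, c α * α i * α p * α q * ccot (ev α x) =
      (1 / 8) * Tt r s t i p q := by
    intro i p q
    rw [sum_F4, Tt, Finset.mul_sum]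
    refine Finset.sum_congr rfl fun k _ => ?_
    rw [hc, vc_apply, vc_apply, vc_apply]; ring
  have hmem : ∀ k, vc k ∈ F4plus := fun k => by
    rw [F4plus_eq]; exact Finset.mem_image_of_mem _ (Finset.mem_univ _)
  have hrel : ∀ τ ∈ triples, t τ.1 * t τ.2.1 - t τ.2.2 * (t τ.1 + t τ.2.1) - 1 = 0 := by
    rintro ⟨a, b, g⟩ hτ
    have hV := triples_spec _ hτ
    have hev : ev (vc g) x = ev (vc a) x + ev (vc b) x := by
      unfold ev
      rw [← Finset.sum_add_distrib]
      refine Finset.sum_congr rfl fun k _ => ?_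
      have := congrFun hV k
      simp only [Pi.add_apply] at this
      rw [vc_apply, vc_apply, vc_apply, ← this]
      push_cast; ring
    have h := cot_rel _ _ (hx _ (hmem a)) (hx _ (hmem b)) (hev ▸ hx _ (hmem g))
    simpa only [ht, hev] using h
  have hcore := core r s t hrel
  have hlam' : lam ^ 2 * (4 * r + s) = 108 * (2 * r + s) ^ 2 := by
    rw [hlam, div_mul_cancel₀ _ h4]
  ext p q
  rw [Matrix.mul_apply, Matrix.mul_apply]
  simp only [Matrix.mul_diagonal, Fintype.sum_sum_type]
  rcases p with p | p <;> rcases q with q | q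
  · simp only [Fmat, Matrix.of_apply, hA, hG, Sum.elim_inl, Sum.elim_inr, Finset.univ_unique,
      Finset.sum_singleton]
    have h := hcore i j p q
    rw [Cm] at h
    rw [Finset.sum_sub_distrib] at h
    have e : ∀ i j : Fin 4, ∑ m, lam * (1 / 8 * Tt r s t i p m) * (6 * (2 * r + s))⁻¹ *
        (lam * (1 / 8 * Tt r s t j m q)) =
        lam ^ 2 / 64 * (6 * (2 * r + s))⁻¹ * ∑ m, Tt r s t i p m * Tt r s t j m q := by
      intro i j
      rw [Finset.mul_sum]
      exact Finset.sum_congr rfl fun m _ => by ring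
    rw [e, e]
    have hk : lam ^ 2 / 64 * (6 * (2 * r + s))⁻¹ * (-64 * (2 * r + s) * (4 * r + s)) =
        - 18 * (2 * r + s) ^ 2 := by
      field_simp
      linear_combination -hlam'
    have d1 : ∀ (P : Prop) [Decidable P], (if P then 3 * (2 * r + s) else 0) =
        3 * (2 * r + s) * (if P then (1 : ℂ) else 0) := fun P _ => by split_ifs <;> ring
    simp only [d1]
    linear_combination (lam ^ 2 / 64 * (6 * (2 * r + s))⁻¹) * h + ((if i = p then 1 else 0) * (if j = q then 1 else 0)
          - (if i = q then 1 else 0) * (if j = p then 1 else 0)) * hk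
  · simp only [Fmat, Matrix.of_apply, hA, hG, Sum.elim_inl, Sum.elim_inr, Finset.univ_unique,
      Finset.sum_singleton, mul_ite, mul_zero, ite_mul, zero_mul, Finset.sum_ite_eq,
      Finset.mem_univ, if_true, add_zero]
    rw [Tt_comm12 r s t i p j, Tt_comm23 r s t p i j, Tt_comm12 r s t p j i]
  · simp only [Fmat, Matrix.of_apply, hA, hG, Sum.elim_inl, Sum.elim_inr, Finset.univ_unique,
      Finset.sum_singleton, mul_ite, mul_zero, ite_mul, zero_mul, Finset.sum_ite_eq,
      Finset.mem_univ, if_true, add_zero]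
    rw [Tt_comm12 r s t i j q]
    simp only [ite_self]
  · simp only [Fmat, Matrix.of_apply, hA, hG, Sum.elim_inl, Sum.elim_inr, Finset.univ_unique,
      Finset.sum_singleton, mul_ite, mul_zero, ite_mul, zero_mul, Finset.sum_ite_eq,
      Finset.mem_univ, if_true, add_zero]
    by_cases hij : i = j
    · subst hij; rfl
    · simp [hij, Ne.symm hij]

end
end
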